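/- arXiv:1902.01165 — 2 statements merged into one kernel-verified Lean document; each statement's English description precedes it below -/
import Mathlib

section
/- Let the general recurrent-IFS interpolation setup hold and assume the matchable conditions. Let C*(I×J) be the set of continuous functions φ on I×J with φ(x_i,y_j)=z_{ij} for all i,j, equipped with the sup metric. Then the map T given by Tφ(x,y)=F_{ij}(u_i^{-1}(x),v_j^{-1}(y),φ(u_i^{-1}(x),v_j^{-1}(y))) for (x,y)∈D_{ij} is a well-defined map from C*(I×J) to itself (in particular the values on common boundaries of the D_{ij} agree), and T is a contraction: for all φ,ψ∈C*(I×J), sup|Tφ−Tψ| ≤ α·sup|φ−ψ|, where α = max_{i,j} α_{ij} < 1. -/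
/- General recurrent-IFS interpolation setup (Liang–Ruan,
   "Construction and box dimension of recurrent fractal interpolation surfaces"). -/

noncomputable section
open Set

/-- Data of the general recurrent-IFS interpolation setup: grid points `x i`, `y j`
(for `i ≤ N`, `j ≤ M`), interpolation values `z i j`, index maps `px`, `py` selecting
the points `x' i = x (px i)`, `y' j = y (py j)`, the horizontal contractions `u i`, `v j`,
the maps `F i j`, and the contraction ratios `alpha i j`. -/
structure GenData where
  N : ℕ
  M : ℕ
  x : ℕ → ℝ
  y : ℕ → ℝ
  z : ℕ → ℕ → ℝ
  px : ℕ → ℕ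
  py : ℕ → ℕ
  u : ℕ → ℝ → ℝ
  v : ℕ → ℝ → ℝ
  F : ℕ → ℕ → ℝ → ℝ → ℝ → ℝ
  alpha : ℕ → ℕ → ℝ

namespace GenData

def x' (D : GenData) (i : ℕ) : ℝ := D.x (D.px i)
def y' (D : GenData) (j : ℕ) : ℝ := D.y (D.py j)
def I (D : GenData) : Set ℝ := Icc (D.x 0) (D.x D.N)
def J (D : GenData) : Set ℝ := Icc (D.y 0) (D.y D.M)
def Ii (D : GenData) (i : ℕ) : Set ℝ := Icc (D.x (i - 1)) (D.x i)
def Jj (D : GenData) (j : ℕ) : Set ℝ := Icc (D.y (j - 1)) (D.y j)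
def Dij (D : GenData) (i j : ℕ) : Set (ℝ × ℝ) := D.Ii i ×ˢ D.Jj j
def Ii' (D : GenData) (i : ℕ) : Set ℝ := uIcc (D.x' (i - 1)) (D.x' i)
def Jj' (D : GenData) (j : ℕ) : Set ℝ := uIcc (D.y' (j - 1)) (D.y' j)
def Dij' (D : GenData) (i j : ℕ) : Set (ℝ × ℝ) := D.Ii' i ×ˢ D.Jj' j
def z' (D : GenData) (i j : ℕ) : ℝ := D.z (D.px i) (D.py j)

/-- Hypotheses on the grid data: `N, M ≥ 2`, increasing grids, `x' i` chosen from the grid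
with `|x'_i - x'_{i-1}| > x_i - x_{i-1}`, and each `u i` (resp. `v j`) a contractive
homeomorphism from `I'_i` onto `I_i` (resp. `J'_j` onto `J_j`) with the endpoint conditions. -/
structure GridHyp (D : GenData) : Prop where
  hN : 2 ≤ D.N
  hM : 2 ≤ D.M
  hx : ∀ i < D.N, D.x i < D.x (i + 1)
  hy : ∀ j < D.M, D.y j < D.y (j + 1)
  hpx : ∀ i ≤ D.N, D.px i ≤ D.N
  hpy : ∀ j ≤ D.M, D.py j ≤ D.M
  hgapx : ∀ i, 1 ≤ i → i ≤ D.N → D.x i - D.x (i - 1) < |D.x' i - D.x' (i - 1)|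
  hgapy : ∀ j, 1 ≤ j → j ≤ D.M → D.y j - D.y (j - 1) < |D.y' j - D.y' (j - 1)|
  hu : ∀ i, 1 ≤ i → i ≤ D.N →
    (∃ c, 0 ≤ c ∧ c < 1 ∧ ∀ s ∈ D.Ii' i, ∀ t ∈ D.Ii' i, |D.u i s - D.u i t| ≤ c * |s - t|) ∧
    Set.BijOn (D.u i) (D.Ii' i) (D.Ii i) ∧
    D.u i (D.x' (i - 1)) = D.x (i - 1) ∧ D.u i (D.x' i) = D.x i
  hv : ∀ j, 1 ≤ j → j ≤ D.M →
    (∃ c, 0 ≤ c ∧ c < 1 ∧ ∀ s ∈ D.Jj' j, ∀ t ∈ D.Jj' j, |D.v j s - D.v j t| ≤ c * |s - t|) ∧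
    Set.BijOn (D.v j) (D.Jj' j) (D.Jj j) ∧
    D.v j (D.y' (j - 1)) = D.y (j - 1) ∧ D.v j (D.y' j) = D.y j

/-- Hypotheses on the maps `F i j`: continuity on `D'_{ij} × ℝ`, the interpolation
(corner) conditions, and the uniform contraction in the third variable. -/
structure FHyp (D : GenData) : Prop where
  hFcont : ∀ i j, 1 ≤ i → i ≤ D.N → 1 ≤ j → j ≤ D.M →
    ContinuousOn (fun p : (ℝ × ℝ) × ℝ => D.F i j p.1.1 p.1.2 p.2) (D.Dij' i j ×ˢ (univ : Set ℝ))
  hFval : ∀ i j, 1 ≤ i → i ≤ D.N → 1 ≤ j → j ≤ D.M →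
    ∀ k ∈ ({i - 1, i} : Set ℕ), ∀ l ∈ ({j - 1, j} : Set ℕ),
      D.F i j (D.x' k) (D.y' l) (D.z' k l) = D.z k l
  halpha : ∀ i j, 1 ≤ i → i ≤ D.N → 1 ≤ j → j ≤ D.M → 0 < D.alpha i j ∧ D.alpha i j < 1
  hFlip : ∀ i j, 1 ≤ i → i ≤ D.N → 1 ≤ j → j ≤ D.M →
    ∀ p ∈ D.Dij' i j, ∀ z1 z2 : ℝ,
      |D.F i j p.1 p.2 z1 - D.F i j p.1 p.2 z2| ≤ D.alpha i j * |z1 - z2|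

/-- The matchable conditions.  Here `x* = u_i⁻¹(x_i) = u_{i+1}⁻¹(x_i) = x'_i` and
`y* = v_j⁻¹(y_j) = v_{j+1}⁻¹(y_j) = y'_j` (since `u i (x' i) = u (i+1) (x' i) = x i`
and `u i`, `u (i+1)` are injective, and similarly for `v`). -/
def Matchable (D : GenData) : Prop :=
  (∀ i j, 1 ≤ i → i < D.N → 1 ≤ j → j ≤ D.M →
    ∀ t ∈ D.Jj' j, ∀ w : ℝ, D.F i j (D.x' i) t w = D.F (i + 1) j (D.x' i) t w) ∧
  (∀ i j, 1 ≤ i → i ≤ D.N → 1 ≤ j → j < D.M →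
    ∀ t ∈ D.Ii' i, ∀ w : ℝ, D.F i j t (D.y' j) w = D.F i (j + 1) t (D.y' j) w)

/-- `f` is a recurrent fractal interpolation function for the data: it is continuous on
`I × J`, interpolates the data, and satisfies the self-referential equation
`f (u_i x, v_j y) = F_{ij} (x, y, f (x, y))` on each `D'_{ij}` (equivalently, the pieces
of its graph form the invariant set of the recurrent IFS `{W_{ij}}`). -/
def IsRFIF (D : GenData) (f : ℝ × ℝ → ℝ) : Prop :=
  ContinuousOn f (D.I ×ˢ D.J) ∧
  (∀ i ≤ D.N, ∀ j ≤ D.M, f (D.x i, D.y j) = D.z i j) ∧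
  (∀ i j, 1 ≤ i → i ≤ D.N → 1 ≤ j → j ≤ D.M →
    ∀ p ∈ D.Dij' i j, f (D.u i p.1, D.v j p.2) = D.F i j p.1 p.2 (f p))

end GenData

namespace GenData

/-- `α = max_{i,j} α_{ij}` (as the supremum over the finite index range). -/
noncomputable def alphaMax (D : GenData) : ℝ :=
  sSup {a : ℝ | ∃ i j, 1 ≤ i ∧ i ≤ D.N ∧ 1 ≤ j ∧ j ≤ D.M ∧ a = D.alpha i j}

/-- Membership in `C*(I × J)`: continuity on `I × J` together with the interpolation
conditions `φ(x_i, y_j) = z_{ij}`. -/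
def InterpSp (D : GenData) (φ : ℝ × ℝ → ℝ) : Prop :=
  ContinuousOn φ (D.I ×ˢ D.J) ∧ ∀ i ≤ D.N, ∀ j ≤ D.M, φ (D.x i, D.y j) = D.z i j

end GenData

lemma RB_mono {N : ℕ} {x : ℕ → ℝ} (hx : ∀ i < N, x i < x (i + 1)) :
    ∀ k i, i ≤ k → k ≤ N → x i ≤ x k := by
  intro k
  induction k with
  | zero => intro i hi _; obtain rfl : i = 0 := by omega
            exact le_rfl
  | succ k ih =>
    intro i hi hk
    rcases Nat.lt_or_ge i (k + 1) with h | h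
    · exact (ih i (by omega) (by omega)).trans (hx k (by omega)).le
    · obtain rfl : i = k + 1 := by omega
      exact le_rfl

lemma RB_lt {N : ℕ} {x : ℕ → ℝ} (hx : ∀ i < N, x i < x (i + 1))
    {i k : ℕ} (h : i < k) (hk : k ≤ N) : x i < x k :=
  (hx i (by omega)).trans_le (RB_mono hx k (i + 1) h hk)

lemma RB_cover {x : ℕ → ℝ} (t : ℝ) : ∀ N, 1 ≤ N → t ∈ Icc (x 0) (x N) →
    ∃ i, 1 ≤ i ∧ i ≤ N ∧ t ∈ Icc (x (i - 1)) (x i) := by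
  intro N hN
  induction N, hN using Nat.le_induction with
  | base => intro h; exact ⟨1, le_rfl, le_rfl, h⟩
  | succ n hn ih =>
    intro h
    rcases le_total t (x n) with h' | h'
    · obtain ⟨i, a, b, c⟩ := ih ⟨h.1, h'⟩
      exact ⟨i, a, by omega, c⟩
    · exact ⟨n + 1, by omega, le_rfl, h', h.2⟩

lemma RB_adj {N : ℕ} {x x' : ℕ → ℝ} {u : ℕ → ℝ → ℝ} (hx : ∀ i < N, x i < x (i + 1))
    (hu : ∀ i, 1 ≤ i → i ≤ N → BijOn (u i) (uIcc (x' (i - 1)) (x' i)) (Icc (x (i - 1)) (x i)) ∧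
      u i (x' (i - 1)) = x (i - 1) ∧ u i (x' i) = x i)
    {i k : ℕ} (hi : 1 ≤ i) (hik : i < k) (hk : k ≤ N) {s t : ℝ}
    (hs : s ∈ uIcc (x' (i - 1)) (x' i)) (ht : t ∈ uIcc (x' (k - 1)) (x' k))
    (h : u i s = u k t) : k = i + 1 ∧ s = x' i ∧ t = x' i := by
  obtain ⟨b1, _, e1⟩ := hu i hi (by omega)
  obtain ⟨b2, e2, _⟩ := hu k (by omega) hk
  have m1 := (b1.mapsTo hs).2
  have m2 := (b2.mapsTo ht).1
  have m3 := RB_mono hx (k - 1) i (by omega) (by omega)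
  have hki : k = i + 1 := by
    by_contra hne
    have := RB_lt hx (i := i) (k := k - 1) (by omega) (by omega)
    linarith
  subst hki
  simp only [Nat.add_sub_cancel] at *
  refine ⟨trivial, b1.injOn hs right_mem_uIcc (by linarith), 
    b2.injOn ht left_mem_uIcc (by linarith)⟩

lemma RB_adj' {N : ℕ} {x x' : ℕ → ℝ} {u : ℕ → ℝ → ℝ} (hx : ∀ i < N, x i < x (i + 1))
    (hu : ∀ i, 1 ≤ i → i ≤ N → BijOn (u i) (uIcc (x' (i - 1)) (x' i)) (Icc (x (i - 1)) (x i)) ∧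
      u i (x' (i - 1)) = x (i - 1) ∧ u i (x' i) = x i)
    {i k : ℕ} (hi : 1 ≤ i) (hiN : i ≤ N) (hk : 1 ≤ k) (hkN : k ≤ N) {s t : ℝ}
    (hs : s ∈ uIcc (x' (i - 1)) (x' i)) (ht : t ∈ uIcc (x' (k - 1)) (x' k))
    (h : u i s = u k t) :
    s = t ∧ (i = k ∨ (k = i + 1 ∧ s = x' i) ∨ (i = k + 1 ∧ s = x' k)) := by
  rcases lt_trichotomy i k with hh | rfl | hh
  · obtain ⟨a, b, c⟩ := RB_adj hx hu hi hh hkN hs ht h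
    exact ⟨b.trans c.symm, Or.inr (Or.inl ⟨a, b⟩)⟩
  · exact ⟨(hu i hi hiN).1.injOn hs ht h, Or.inl rfl⟩
  · obtain ⟨a, b, c⟩ := RB_adj hx hu hk hh hiN ht hs h.symm
    exact ⟨c.trans b.symm, Or.inr (Or.inr ⟨a, c⟩)⟩

lemma RB_cont {K : Set (ℝ × ℝ)} (hK : IsCompact K) {w : ℝ × ℝ → ℝ × ℝ} (hw : ContinuousOn w K)
    {f g : ℝ × ℝ → ℝ} (hg : ContinuousOn g K) (hf : ∀ q ∈ K, f (w q) = g q) :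
    ContinuousOn f (w '' K) := by
  rw [continuousOn_iff_isClosed]
  intro t ht
  refine ⟨w '' (K ∩ g ⁻¹' t), ?_, ?_⟩
  · have hc : IsCompact (K ∩ g ⁻¹' t) :=
      hK.of_isClosed_subset (hg.preimage_isClosed_of_isClosed hK.isClosed ht) inter_subset_left
    exact (hc.image_of_continuousOn (hw.mono inter_subset_left)).isClosed
  · ext p
    constructor
    · rintro ⟨hp, q, hq, rfl⟩
      refine ⟨⟨q, ⟨hq, ?_⟩, rfl⟩, q, hq, rfl⟩
      have : f (w q) ∈ t := hp
      rwa [hf q hq] at this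
    · rintro ⟨⟨q, ⟨hq, hqt⟩, rfl⟩, _⟩
      refine ⟨?_, q, hq, rfl⟩
      change f (w q) ∈ t
      rw [hf q hq]; exact hqt

lemma RB_contu {u : ℝ → ℝ} {S : Set ℝ} {c : ℝ} (hc : 0 ≤ c)
    (h : ∀ s ∈ S, ∀ t ∈ S, |u s - u t| ≤ c * |s - t|) : ContinuousOn u S := by
  have : LipschitzOnWith ⟨c, hc⟩ u S :=
    LipschitzOnWith.of_dist_le_mul (fun s hs t ht => by
      rw [Real.dist_eq, Real.dist_eq]; exact h s hs t ht)
  exact this.continuousOn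

namespace GenData

/-- Preimage data of a point. -/
def RBP (D : GenData) (p : ℝ × ℝ) (r : ℕ × ℕ × (ℝ × ℝ)) : Prop :=
  1 ≤ r.1 ∧ r.1 ≤ D.N ∧ 1 ≤ r.2.1 ∧ r.2.1 ≤ D.M ∧ r.2.2 ∈ D.Dij' r.1 r.2.1 ∧
    (D.u r.1 r.2.2.1, D.v r.2.1 r.2.2.2) = p

open Classical in
/-- The Read–Bajraktarević operator. -/
def RBT (D : GenData) (φ : ℝ × ℝ → ℝ) (p : ℝ × ℝ) : ℝ :=
  if h : ∃ r, D.RBP p r then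
    D.F h.choose.1 h.choose.2.1 h.choose.2.2.1 h.choose.2.2.2 (φ h.choose.2.2) else 0

lemma RBT_wd (D : GenData) (h1 : D.GridHyp) (hm : D.Matchable) (φ : ℝ × ℝ → ℝ)
    {p : ℝ × ℝ} {r r' : ℕ × ℕ × (ℝ × ℝ)} (h : D.RBP p r) (h' : D.RBP p r') :
    D.F r.1 r.2.1 r.2.2.1 r.2.2.2 (φ r.2.2) = D.F r'.1 r'.2.1 r'.2.2.1 r'.2.2.2 (φ r'.2.2) := by
  obtain ⟨i, j, s, t⟩ := r
  obtain ⟨i', j', s', t'⟩ := r'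
  obtain ⟨a1, a2, a3, a4, ⟨hs, ht⟩, e⟩ := h
  obtain ⟨b1, b2, b3, b4, ⟨hs', ht'⟩, e'⟩ := h'
  simp only at *
  have ee := e.trans e'.symm
  rw [Prod.mk.injEq] at ee
  obtain ⟨rfl, ci⟩ := RB_adj' h1.hx (fun i a b => (h1.hu i a b).2) a1 a2 b1 b2 hs hs' ee.1
  obtain ⟨rfl, cj⟩ := RB_adj' h1.hy (fun i a b => (h1.hv i a b).2) a3 a4 b3 b4 ht ht' ee.2
  have s1 : D.F i j s t (φ (s, t)) = D.F i' j s t (φ (s, t)) := by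
    rcases ci with rfl | ⟨rfl, e0⟩ | ⟨rfl, e0⟩
    · rfl
    · rw [e0]; exact hm.1 i j a1 (by omega) a3 a4 t ht _
    · rw [e0]; exact (hm.1 i' j b1 (by omega) a3 a4 t ht _).symm
  have s2 : D.F i' j s t (φ (s, t)) = D.F i' j' s t (φ (s, t)) := by
    rcases cj with rfl | ⟨rfl, e0⟩ | ⟨rfl, e0⟩
    · rfl
    · rw [e0]; exact hm.2 i' j b1 b2 a3 (by omega) s hs' _
    · rw [e0]; exact (hm.2 i' j' b1 b2 b3 (by omega) s hs' _).symm
  exact s1.trans s2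

lemma RBT_eq (D : GenData) (h1 : D.GridHyp) (hm : D.Matchable) (φ : ℝ × ℝ → ℝ)
    {i j : ℕ} (a1 : 1 ≤ i) (a2 : i ≤ D.N) (a3 : 1 ≤ j) (a4 : j ≤ D.M) {q : ℝ × ℝ}
    (hq : q ∈ D.Dij' i j) : D.RBT φ (D.u i q.1, D.v j q.2) = D.F i j q.1 q.2 (φ q) := by
  have hr : D.RBP (D.u i q.1, D.v j q.2) (i, j, q) := ⟨a1, a2, a3, a4, hq, rfl⟩
  have hex : ∃ r, D.RBP (D.u i q.1, D.v j q.2) r := ⟨_, hr⟩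
  rw [RBT, dif_pos hex]
  exact RBT_wd D h1 hm φ hex.choose_spec hr

lemma RB_image (D : GenData) (h1 : D.GridHyp) {i j : ℕ} (a1 : 1 ≤ i) (a2 : i ≤ D.N)
    (a3 : 1 ≤ j) (a4 : j ≤ D.M) :
    (fun q : ℝ × ℝ => (D.u i q.1, D.v j q.2)) '' D.Dij' i j = D.Dij i j := by
  have := Set.prodMap_image_prod (D.u i) (D.v j) (D.Ii' i) (D.Jj' j)
  rw [(h1.hu i a1 a2).2.1.image_eq, (h1.hv j a3 a4).2.1.image_eq] at this
  exact this

lemma RB_sub (D : GenData) (h1 : D.GridHyp) {i j : ℕ} (a2 : i ≤ D.N)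
    (a4 : j ≤ D.M) : D.Dij' i j ⊆ D.I ×ˢ D.J := by
  have hX : ∀ k ≤ D.N, D.x' k ∈ D.I := fun k hk =>
    ⟨RB_mono h1.hx _ 0 (by omega) (h1.hpx k hk), RB_mono h1.hx _ _ (h1.hpx k hk) le_rfl⟩
  have hY : ∀ k ≤ D.M, D.y' k ∈ D.J := fun k hk =>
    ⟨RB_mono h1.hy _ 0 (by omega) (h1.hpy k hk), RB_mono h1.hy _ _ (h1.hpy k hk) le_rfl⟩
  exact Set.prod_mono (uIcc_subset_Icc (hX _ (by omega)) (hX _ a2))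
    (uIcc_subset_Icc (hY _ (by omega)) (hY _ a4))

lemma RB_cov (D : GenData) (h1 : D.GridHyp) {p : ℝ × ℝ} (hp : p ∈ D.I ×ˢ D.J) :
    ∃ i j, 1 ≤ i ∧ i ≤ D.N ∧ 1 ≤ j ∧ j ≤ D.M ∧ p ∈ D.Dij i j := by
  obtain ⟨i, a, b, c⟩ := RB_cover p.1 D.N (by have := h1.hN; omega) hp.1
  obtain ⟨j, a', b', c'⟩ := RB_cover p.2 D.M (by have := h1.hM; omega) hp.2
  exact ⟨i, j, a, b, a', b', c, c'⟩

lemma RB_alpha_fin (D : GenData) :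
    {a : ℝ | ∃ i j, 1 ≤ i ∧ i ≤ D.N ∧ 1 ≤ j ∧ j ≤ D.M ∧ a = D.alpha i j}.Finite := by
  refine (((Set.finite_Icc 1 D.N).prod (Set.finite_Icc 1 D.M)).image
    (fun r : ℕ × ℕ => D.alpha r.1 r.2)).subset ?_
  rintro a ⟨i, j, h1, h2, h3, h4, rfl⟩
  exact ⟨(i, j), ⟨⟨h1, h2⟩, h3, h4⟩, rfl⟩

lemma RB_continuous (D : GenData) (h1 : D.GridHyp) (h2 : D.FHyp) (hm : D.Matchable)
    {φ : ℝ × ℝ → ℝ} (hφ : ContinuousOn φ (D.I ×ˢ D.J)) :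
    ContinuousOn (D.RBT φ) (D.I ×ˢ D.J) := by
  have key : ContinuousOn (D.RBT φ)
      (⋃ r : (Icc 1 D.N ×ˢ Icc 1 D.M : Set (ℕ × ℕ)), D.Dij r.1.1 r.1.2) := by
    have : Finite (Icc 1 D.N ×ˢ Icc 1 D.M : Set (ℕ × ℕ)) :=
      ((Set.finite_Icc 1 D.N).prod (Set.finite_Icc 1 D.M)).to_subtype
    refine (locallyFinite_of_finite _).continuousOn_iUnion (fun r => ?_) ?_
    · exact isClosed_Icc.prod isClosed_Icc
    · rintro ⟨⟨i, j⟩, ⟨a1, a2⟩, a3, a4⟩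
      simp only at *
      rw [← RB_image D h1 a1 a2 a3 a4]
      obtain ⟨⟨c, hc, -, hcu⟩, -⟩ := h1.hu i a1 a2
      obtain ⟨⟨d, hd, -, hdv⟩, -⟩ := h1.hv j a3 a4
      have hu := RB_contu hc hcu
      have hv := RB_contu hd hdv
      refine RB_cont (K := D.Dij' i j) (isCompact_uIcc.prod isCompact_uIcc)
        ((hu.comp continuousOn_fst (fun q hq => hq.1)).prodMk
          (hv.comp continuousOn_snd (fun q hq => hq.2)))
        (g := fun q => D.F i j q.1 q.2 (φ q)) ?_ (fun q hq => RBT_eq D h1 hm φ a1 a2 a3 a4 hq)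
      exact (h2.hFcont i j a1 a2 a3 a4).comp (f := fun q : ℝ × ℝ => (q, φ q))
        (continuousOn_id.prodMk (hφ.mono (RB_sub D h1 a2 a4)))
        (fun q hq => ⟨hq, trivial⟩)
  refine key.mono fun p hp => ?_
  obtain ⟨i, j, a1, a2, a3, a4, h⟩ := RB_cov D h1 hp
  exact mem_iUnion.2 ⟨⟨(i, j), ⟨a1, a2⟩, a3, a4⟩, h⟩

lemma RB_idx {N : ℕ} (hN : 2 ≤ N) {k : ℕ} (hk : k ≤ N) :
    ∃ i, 1 ≤ i ∧ i ≤ N ∧ (k = i - 1 ∨ k = i) := by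
  rcases Nat.eq_zero_or_pos k with rfl | h
  · exact ⟨1, le_rfl, by omega, Or.inl rfl⟩
  · exact ⟨k, h, hk, Or.inr rfl⟩

lemma RB_interp (D : GenData) (h1 : D.GridHyp) (h2 : D.FHyp) (hm : D.Matchable)
    {φ : ℝ × ℝ → ℝ} (hφ : ∀ i ≤ D.N, ∀ j ≤ D.M, φ (D.x i, D.y j) = D.z i j)
    {k l : ℕ} (hk : k ≤ D.N) (hl : l ≤ D.M) : D.RBT φ (D.x k, D.y l) = D.z k l := by
  obtain ⟨i, a1, a2, hi⟩ := RB_idx h1.hN hk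
  obtain ⟨j, a3, a4, hj⟩ := RB_idx h1.hM hl
  have hF := h2.hFval i j a1 a2 a3 a4 k hi l hj
  have hux : D.x' k ∈ D.Ii' i ∧ D.u i (D.x' k) = D.x k := by
    obtain ⟨-, -, e1, e2⟩ := h1.hu i a1 a2
    rcases hi with rfl | rfl
    · exact ⟨left_mem_uIcc, e1⟩
    · exact ⟨right_mem_uIcc, e2⟩
  have hvy : D.y' l ∈ D.Jj' j ∧ D.v j (D.y' l) = D.y l := by
    obtain ⟨-, -, e1, e2⟩ := h1.hv j a3 a4
    rcases hj with rfl | rfl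
    · exact ⟨left_mem_uIcc, e1⟩
    · exact ⟨right_mem_uIcc, e2⟩
  have := RBT_eq D h1 hm φ a1 a2 a3 a4 (q := (D.x' k, D.y' l)) ⟨hux.1, hvy.1⟩
  simp only [hux.2, hvy.2] at this
  rw [this, ← hF]
  congr 1
  exact hφ _ (h1.hpx k hk) _ (h1.hpy l hl)

end GenData

open GenData in
/-- Under the matchable conditions the Read–Bajraktarević operator
`Tφ(x,y) = F_{ij}(u_i⁻¹ x, v_j⁻¹ y, φ(u_i⁻¹ x, v_j⁻¹ y))` on `D_{ij}` is a well-defined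
map from `C*(I×J)` to itself (equivalently: there is a map `T` of `C*(I×J)` into itself
with `Tφ(u_i x, v_j y) = F_{ij}(x, y, φ(x,y))` on every `D'_{ij}`, so in particular the
values on common boundaries of the `D_{ij}` agree), and `T` is a contraction with ratio
`α = max α_{ij} < 1` for the sup metric. -/
theorem RB_operator_welldefined_contraction (D : GenData) (h1 : D.GridHyp) (h2 : D.FHyp)
    (hm : D.Matchable) :
    D.alphaMax < 1 ∧
    ∃ T : (ℝ × ℝ → ℝ) → ℝ × ℝ → ℝ,
      (∀ φ, D.InterpSp φ → D.InterpSp (T φ)) ∧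
      (∀ φ, D.InterpSp φ → ∀ i j, 1 ≤ i → i ≤ D.N → 1 ≤ j → j ≤ D.M →
        ∀ p ∈ D.Dij' i j, T φ (D.u i p.1, D.v j p.2) = D.F i j p.1 p.2 (φ p)) ∧
      ∀ φ ψ, D.InterpSp φ → D.InterpSp ψ → ∀ b : ℝ,
        (∀ p ∈ D.I ×ˢ D.J, |φ p - ψ p| ≤ b) →
        ∀ p ∈ D.I ×ˢ D.J, |T φ p - T ψ p| ≤ D.alphaMax * b := by
  have hfin := RB_alpha_fin D
  refine ⟨?_, D.RBT, ?_, ?_, ?_⟩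
  · have hne : {a : ℝ | ∃ i j, 1 ≤ i ∧ i ≤ D.N ∧ 1 ≤ j ∧ j ≤ D.M ∧ a = D.alpha i j}.Nonempty :=
      ⟨D.alpha 1 1, 1, 1, le_rfl, by have := h1.hN; omega, le_rfl, by have := h1.hM; omega, rfl⟩
    obtain ⟨i, j, a1, a2, a3, a4, e⟩ := hne.csSup_mem hfin
    rw [alphaMax, e]
    exact (h2.halpha i j a1 a2 a3 a4).2
  · exact fun φ hφ => ⟨RB_continuous D h1 h2 hm hφ.1,
      fun i hi j hj => RB_interp D h1 h2 hm hφ.2 hi hj⟩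
  · exact fun φ _ i j a1 a2 a3 a4 q hq => RBT_eq D h1 hm φ a1 a2 a3 a4 hq
  · intro φ ψ _ _ b hb p hp
    obtain ⟨i, j, a1, a2, a3, a4, h⟩ := RB_cov D h1 hp
    rw [← RB_image D h1 a1 a2 a3 a4] at h
    obtain ⟨q, hq, rfl⟩ := h
    simp only
    rw [RBT_eq D h1 hm φ a1 a2 a3 a4 hq, RBT_eq D h1 hm ψ a1 a2 a3 a4 hq]
    have hα : D.alpha i j ≤ D.alphaMax :=
      le_csSup hfin.bddAbove ⟨i, j, a1, a2, a3, a4, rfl⟩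
    have h0 := (h2.halpha i j a1 a2 a3 a4).1
    exact (h2.hFlip i j a1 a2 a3 a4 q hq _ _).trans
      (mul_le_mul hα (hb q (RB_sub D h1 a2 a4 hq)) (abs_nonneg _) (h0.le.trans hα))
end
end

section
/- Let f be the bilinear RFIF from the bilinear RFIF setup, and assume the vertical scaling factors {s_{ij}} are steady and have uniform sums {γ_rt} under a compatible partition B={B_r}_{r=1}^m (with γ_rt=0 when Λ_r∩Λ'_t=∅). Then there exists a constant C>0 such that for all 1≤r≤m and all n≥1, |O(f,n+1,B_r) − Σ_{t=1}^m γ_rt·O(f,n,B_t)| ≤ C·Kⁿ. -/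
/- Bilinear recurrent fractal interpolation surfaces on [0,1]² (Liang–Ruan,
   "Construction and box dimension of recurrent fractal interpolation surfaces"). -/

noncomputable section
open Set Filter

namespace RFIS

/-- The grid point `x_i = i / N` (also used for `y_j = j / N`). -/
def xg (N i : ℕ) : ℝ := (i : ℝ) / (N : ℝ)

/-- The interval `I_i = [x_{i-1}, x_i]` (also `J_j`). -/
def Ii (N i : ℕ) : Set ℝ := Icc (xg N (i - 1)) (xg N i)

/-- The unit square `[0,1]²`. -/
def sq : Set (ℝ × ℝ) := Icc (0 : ℝ) 1 ×ˢ Icc (0 : ℝ) 1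

/-- The cell `D_{ij} = I_i × J_j`. -/
def Dij (N i j : ℕ) : Set (ℝ × ℝ) := Ii N i ×ˢ Ii N j

/-- The point `x'_i = x_{px i}` chosen from the grid. -/
def xp (N : ℕ) (px : ℕ → ℕ) (i : ℕ) : ℝ := xg N (px i)

/-- The interval `I'_i`, with endpoints `x'_{i-1}` and `x'_i`. -/
def Ii' (N : ℕ) (px : ℕ → ℕ) (i : ℕ) : Set ℝ := uIcc (xp N px (i - 1)) (xp N px i)

/-- The domain `D'_{ij} = I'_i × J'_j`. -/
def Dij' (N : ℕ) (px py : ℕ → ℕ) (i j : ℕ) : Set (ℝ × ℝ) := Ii' N px i ×ˢ Ii' N py j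

/-- The affine map `u_i : I'_i → I_i` with `u_i(x'_{i-1}) = x_{i-1}` and `u_i(x'_i) = x_i`
(also used for `v_j`). -/
def usub (N : ℕ) (px : ℕ → ℕ) (i : ℕ) (t : ℝ) : ℝ :=
  xg N (i - 1) + (t - xp N px (i - 1)) * ((xg N i - xg N (i - 1)) / (xp N px i - xp N px (i - 1)))

/-- `F` is bilinear on `E`: of the form `a + b x + c y + d x y` on `E`. -/
def IsBilinearOn (F : ℝ × ℝ → ℝ) (E : Set (ℝ × ℝ)) : Prop :=
  ∃ a b c d : ℝ, ∀ p ∈ E, F p = a + b * p.1 + c * p.2 + d * p.1 * p.2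

/-- The bilinear RFIF setup on `[0,1]²`: data `z_{ij}` on the uniform `N × N` grid
(`M = N`, `x_i = y_i = i/N`), vertical scaling factors `s_{ij}` with `|s_{ij}| < 1`,
the points `x'_i = x_{px i}`, `y'_j = y_{py j}` with `|I'_i| = K |I_i|`, `|J'_j| = K |J_j|`
and the domains `D'_{ij}` pairwise equal or with disjoint interiors; the functions `S`, `h`
bilinear on each cell with the prescribed grid values, the bilinear functions `g_{ij}` with
corner values `z'`, and the bilinear RFIF `f`: the continuous function interpolating the
data and satisfying `f(u_i x, v_j y) = S(u_i x, v_j y)(f(x,y) − g_{ij}(x,y)) + h(u_i x, v_j y)`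
on each `D'_{ij}`. -/
structure Setup where
  N : ℕ
  K : ℕ
  hN : 2 ≤ N
  hK : 2 ≤ K
  px : ℕ → ℕ
  py : ℕ → ℕ
  hpx : ∀ i ≤ N, px i ≤ N
  hpy : ∀ j ≤ N, py j ≤ N
  hKx : ∀ i, 1 ≤ i → i ≤ N → |xp N px i - xp N px (i - 1)| = (K : ℝ) * (xg N i - xg N (i - 1))
  hKy : ∀ j, 1 ≤ j → j ≤ N → |xp N py j - xp N py (j - 1)| = (K : ℝ) * (xg N j - xg N (j - 1))
  hdisj : ∀ i₁ j₁ i₂ j₂, 1 ≤ i₁ → i₁ ≤ N → 1 ≤ j₁ → j₁ ≤ N → 1 ≤ i₂ → i₂ ≤ N → 1 ≤ j₂ → j₂ ≤ N →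
    Dij' N px py i₁ j₁ = Dij' N px py i₂ j₂ ∨
      interior (Dij' N px py i₁ j₁) ∩ interior (Dij' N px py i₂ j₂) = ∅
  z : ℕ → ℕ → ℝ
  s : ℕ → ℕ → ℝ
  hs : ∀ i ≤ N, ∀ j ≤ N, |s i j| < 1
  S : ℝ × ℝ → ℝ
  hScont : ContinuousOn S sq
  hSbil : ∀ i j, 1 ≤ i → i ≤ N → 1 ≤ j → j ≤ N → IsBilinearOn S (Dij N i j)
  hSval : ∀ i ≤ N, ∀ j ≤ N, S (xg N i, xg N j) = s i j
  h : ℝ × ℝ → ℝ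
  hhcont : ContinuousOn h sq
  hhbil : ∀ i j, 1 ≤ i → i ≤ N → 1 ≤ j → j ≤ N → IsBilinearOn h (Dij N i j)
  hhval : ∀ i ≤ N, ∀ j ≤ N, h (xg N i, xg N j) = z i j
  g : ℕ → ℕ → ℝ × ℝ → ℝ
  hgbil : ∀ i j, 1 ≤ i → i ≤ N → 1 ≤ j → j ≤ N → IsBilinearOn (g i j) (Dij' N px py i j)
  hgval : ∀ i j, 1 ≤ i → i ≤ N → 1 ≤ j → j ≤ N →
    ∀ k ∈ ({i - 1, i} : Set ℕ), ∀ l ∈ ({j - 1, j} : Set ℕ),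
      g i j (xp N px k, xp N py l) = z (px k) (py l)
  f : ℝ × ℝ → ℝ
  hfcont : ContinuousOn f sq
  hfval : ∀ i ≤ N, ∀ j ≤ N, f (xg N i, xg N j) = z i j
  hfeq : ∀ i j, 1 ≤ i → i ≤ N → 1 ≤ j → j ≤ N → ∀ p ∈ Dij' N px py i j,
    f (usub N px i p.1, usub N py j p.2)
      = S (usub N px i p.1, usub N py j p.2) * (f p - g i j p)
        + h (usub N px i p.1, usub N py j p.2)

/-- The oscillation `O(f, E) = sup {f(x') − f(x'') : x', x'' ∈ E}`. -/
def Osc (f : ℝ × ℝ → ℝ) (E : Set (ℝ × ℝ)) : ℝ :=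
  sSup {d : ℝ | ∃ p ∈ E, ∃ q ∈ E, d = f p - f q}

/-- The dyadic-type square `Dⁿ_{kl} = [(k-1)/(KⁿN), k/(KⁿN)] × [(l-1)/(KⁿN), l/(KⁿN)]`. -/
def Dn (N K n k l : ℕ) : Set (ℝ × ℝ) :=
  Icc (((k : ℝ) - 1) / ((K : ℝ) ^ n * (N : ℝ))) ((k : ℝ) / ((K : ℝ) ^ n * (N : ℝ))) ×ˢ
    Icc (((l : ℝ) - 1) / ((K : ℝ) ^ n * (N : ℝ))) ((l : ℝ) / ((K : ℝ) ^ n * (N : ℝ)))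

open Classical in
/-- `O(f, n, U) = Σ { O(f, Dⁿ_{kl}) : Dⁿ_{kl} ⊆ U }`. -/
def OscSum (f : ℝ × ℝ → ℝ) (N K n : ℕ) (U : Set (ℝ × ℝ)) : ℝ :=
  ∑ k ∈ Finset.Icc 1 (K ^ n * N), ∑ l ∈ Finset.Icc 1 (K ^ n * N),
    if Dn N K n k l ⊆ U then Osc f (Dn N K n k l) else 0

/-- The `ε`-coordinate cube `∏_{i=1}^3 [k_i ε, (k_i+1) ε]` in `ℝ³`. -/
def cube (ε : ℝ) (k : ℤ × ℤ × ℤ) : Set (ℝ × ℝ × ℝ) :=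
  Icc ((k.1 : ℝ) * ε) (((k.1 : ℝ) + 1) * ε) ×ˢ
    Icc ((k.2.1 : ℝ) * ε) (((k.2.1 : ℝ) + 1) * ε) ×ˢ
      Icc ((k.2.2 : ℝ) * ε) (((k.2.2 : ℝ) + 1) * ε)

/-- `N_E(ε)`: the number of `ε`-coordinate cubes intersecting `E`. -/
def Ncubes (E : Set (ℝ × ℝ × ℝ)) (ε : ℝ) : ℕ :=
  {k : ℤ × ℤ × ℤ | (cube ε k ∩ E).Nonempty}.ncard

/-- `log N_E(ε) / log (1/ε)`. -/
def boxRatio (E : Set (ℝ × ℝ × ℝ)) (ε : ℝ) : ℝ :=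
  Real.log (Ncubes E ε) / Real.log (1 / ε)

/-- The upper box dimension `lim sup_{ε→0+} log N_E(ε) / log (1/ε)`. -/
def upperBoxDim (E : Set (ℝ × ℝ × ℝ)) : ℝ :=
  limsup (boxRatio E) (nhdsWithin 0 (Ioi 0))

/-- The lower box dimension `lim inf_{ε→0+} log N_E(ε) / log (1/ε)`. -/
def lowerBoxDim (E : Set (ℝ × ℝ × ℝ)) : ℝ :=
  liminf (boxRatio E) (nhdsWithin 0 (Ioi 0))

/-- The box dimension of `E` exists and equals `d`. -/
def HasBoxDim (E : Set (ℝ × ℝ × ℝ)) (d : ℝ) : Prop :=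
  Tendsto (boxRatio E) (nhdsWithin 0 (Ioi 0)) (nhds d)

/-- The graph `Γ f|_E = {(x, y, f(x,y)) : (x,y) ∈ E}`. -/
def graphOn (f : ℝ × ℝ → ℝ) (E : Set (ℝ × ℝ)) : Set (ℝ × ℝ × ℝ) :=
  (fun p : ℝ × ℝ => (p.1, p.2, f p)) '' E

/-- `B` is a partition of `[0,1]²`: nonempty sets covering `[0,1]²` with pairwise
disjoint interiors. -/
def IsPartition (m : ℕ) (B : Fin m → Set (ℝ × ℝ)) : Prop :=
  (∀ r, (B r).Nonempty) ∧ (⋃ r, B r) = sq ∧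
    ∀ r t, r ≠ t → interior (B r) ∩ interior (B t) = ∅

/-- The partition `B` is compatible with `{D_{ij}, D'_{ij}}`: every `D_{ij}` lies in some
`B_r` and every `D'_{ij}` in some `B_t`; and whenever some `(i,j)` has `D_{ij} ⊆ B_r` and
`D'_{ij} ⊆ B_t`, then `B_t = ⋃ {D'_{kl} : D_{kl} ⊆ B_r, D'_{kl} ⊆ B_t}`. -/
def IsCompatible (st : Setup) {m : ℕ} (B : Fin m → Set (ℝ × ℝ)) : Prop :=
  (∀ i j, 1 ≤ i → i ≤ st.N → 1 ≤ j → j ≤ st.N →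
    (∃ r, Dij st.N i j ⊆ B r) ∧ (∃ t, Dij' st.N st.px st.py i j ⊆ B t)) ∧
  (∀ r t : Fin m,
    (∃ i j, 1 ≤ i ∧ i ≤ st.N ∧ 1 ≤ j ∧ j ≤ st.N ∧
      Dij st.N i j ⊆ B r ∧ Dij' st.N st.px st.py i j ⊆ B t) →
    B t = ⋃ (k : ℕ) (l : ℕ)
      (_ : 1 ≤ k ∧ k ≤ st.N ∧ 1 ≤ l ∧ l ≤ st.N ∧
        Dij st.N k l ⊆ B r ∧ Dij' st.N st.px st.py k l ⊆ B t),
      Dij' st.N st.px st.py k l)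

/-- The index set `Σ_N × Σ_N = {1,…,N}²`. -/
def idxS (N : ℕ) : Finset (ℕ × ℕ) := Finset.Icc 1 N ×ˢ Finset.Icc 1 N

open Classical in
/-- `Λ_r = {(i,j) : D_{ij} ⊆ B_r}`. -/
def Lam (st : Setup) {m : ℕ} (B : Fin m → Set (ℝ × ℝ)) (r : Fin m) : Finset (ℕ × ℕ) :=
  (idxS st.N).filter fun ij => Dij st.N ij.1 ij.2 ⊆ B r

open Classical in
/-- `Λ'_t = {(i,j) : D'_{ij} ⊆ B_t}`. -/
def Lam' (st : Setup) {m : ℕ} (B : Fin m → Set (ℝ × ℝ)) (t : Fin m) : Finset (ℕ × ℕ) :=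
  (idxS st.N).filter fun ij => Dij' st.N st.px st.py ij.1 ij.2 ⊆ B t

/-- The rectangle `[x_α, x_{α+K}] × [y_β, y_{β+K}]`. -/
def rect (N K α β : ℕ) : Set (ℝ × ℝ) :=
  Icc (xg N α) (xg N (α + K)) ×ˢ Icc (xg N β) (xg N (β + K))

open Classical in
/-- `Λ_r(α,β) = {(i,j) ∈ Λ_r : D'_{ij} = [x_α, x_{α+K}] × [y_β, y_{β+K}]}`. -/
def LamAB (st : Setup) {m : ℕ} (B : Fin m → Set (ℝ × ℝ)) (r : Fin m) (α β : ℕ) :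
    Finset (ℕ × ℕ) :=
  (Lam st B r).filter fun ij => Dij' st.N st.px st.py ij.1 ij.2 = rect st.N st.K α β

/-- The vertical scaling factors are steady: for each cell, the four corner factors are
all nonnegative or all nonpositive. -/
def Steady (st : Setup) : Prop :=
  ∀ i j, 1 ≤ i → i ≤ st.N → 1 ≤ j → j ≤ st.N →
    (0 ≤ st.s (i - 1) (j - 1) ∧ 0 ≤ st.s (i - 1) j ∧ 0 ≤ st.s i (j - 1) ∧ 0 ≤ st.s i j) ∨
    (st.s (i - 1) (j - 1) ≤ 0 ∧ st.s (i - 1) j ≤ 0 ∧ st.s i (j - 1) ≤ 0 ∧ st.s i j ≤ 0)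

/-- The sum `Σ_{(i,j) ∈ Λ_r(α,β)} |S(u_i(x_a), v_j(y_b))|`. -/
def cSum (st : Setup) {m : ℕ} (B : Fin m → Set (ℝ × ℝ)) (r : Fin m) (α β a b : ℕ) : ℝ :=
  ∑ ij ∈ LamAB st B r α β,
    |st.S (usub st.N st.px ij.1 (xg st.N a), usub st.N st.py ij.2 (xg st.N b))|

/-- The vertical scaling factors have uniform sums `γ_{rt}` under the partition `B`:
whenever `Λ_r ∩ Λ'_t ≠ ∅` and `[x_α, x_{α+K}] × [y_β, y_{β+K}] ∈ {D'_{ij} : (i,j) ∈ Λ_r ∩ Λ'_t}`,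
the four corner sums `Σ_{(i,j) ∈ Λ_r(α,β)} |S(u_i(x_a), v_j(y_b))|`,
`(a,b) ∈ {α, α+K} × {β, β+K}`, all equal `γ_{rt}`. -/
def HasUniformSums (st : Setup) {m : ℕ} (B : Fin m → Set (ℝ × ℝ))
    (γ : Fin m → Fin m → ℝ) : Prop :=
  ∀ r t : Fin m, (Lam st B r ∩ Lam' st B t).Nonempty →
    ∀ α β : ℕ, α + st.K ≤ st.N → β + st.K ≤ st.N →
      (∃ ij ∈ Lam st B r ∩ Lam' st B t,
        Dij' st.N st.px st.py ij.1 ij.2 = rect st.N st.K α β) →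
      cSum st B r α β α β = γ r t ∧ cSum st B r α β (α + st.K) β = γ r t ∧
      cSum st B r α β α (β + st.K) = γ r t ∧ cSum st B r α β (α + st.K) (β + st.K) = γ r t

/-- `γ_{rt} = 0` whenever `Λ_r ∩ Λ'_t = ∅`. -/
def GammaZero (st : Setup) {m : ℕ} (B : Fin m → Set (ℝ × ℝ))
    (γ : Fin m → Fin m → ℝ) : Prop :=
  ∀ r t : Fin m, Lam st B r ∩ Lam' st B t = ∅ → γ r t = 0

/-- There is an `n`-path (for some `n ≥ 1`) from `t` to `r` in the matrix `γ`:
a sequence `i_0 = t, …, i_n = r` with `γ_{i_k, i_{k-1}} > 0` for `k = 1, …, n`. -/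
def IsPathFrom {m : ℕ} (γ : Fin m → Fin m → ℝ) (t r : Fin m) : Prop :=
  ∃ n : ℕ, 1 ≤ n ∧ ∃ c : ℕ → Fin m, c 0 = t ∧ c n = r ∧
    ∀ k, 1 ≤ k → k ≤ n → 0 < γ (c k) (c (k - 1))

/-- `r ∼ t`: there are paths both from `r` to `t` and from `t` to `r`. -/
def Conn {m : ℕ} (γ : Fin m → Fin m → ℝ) (r t : Fin m) : Prop :=
  IsPathFrom γ r t ∧ IsPathFrom γ t r

/-- A connected subset: `r ∼ t` for all `r, t ∈ V`. -/
def IsConnSet {m : ℕ} (γ : Fin m → Fin m → ℝ) (V : Finset (Fin m)) : Prop :=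
  ∀ r ∈ V, ∀ t ∈ V, Conn γ r t

/-- A connected component: a maximal (nonempty) connected subset. -/
def IsConnComp {m : ℕ} (γ : Fin m → Fin m → ℝ) (V : Finset (Fin m)) : Prop :=
  V.Nonempty ∧ IsConnSet γ V ∧ ∀ W : Finset (Fin m), IsConnSet γ W → V ⊆ W → W = V

/-- The spectral radius of a real square matrix: the largest modulus of a (complex)
eigenvalue. -/
def specRad {n : Type*} [Fintype n] [DecidableEq n] (A : Matrix n n ℝ) : ℝ :=
  sSup {x : ℝ | ∃ μ ∈ spectrum ℂ (A.map (algebraMap ℝ ℂ)), x = ‖μ‖}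

/-- The submatrix `G|_V` of `G = (γ_{rt})` indexed by a subset `V`. -/
def subMat {m : ℕ} (γ : Fin m → Fin m → ℝ) (V : Finset (Fin m)) :
    Matrix {x // x ∈ V} {x // x ∈ V} ℝ :=
  fun a b => γ a.1 b.1

/-- `(k,l)` is an ancestor of `(i,j)`: there is a chain `(i,j) = (i_0,j_0), …, (i_n,j_n) = (k,l)`
in `Σ_N × Σ_N` with `D_{i_τ j_τ} ⊆ D'_{i_{τ-1} j_{τ-1}}` for all `τ`. -/
def Ancestor (st : Setup) (i j k l : ℕ) : Prop :=
  ∃ n : ℕ, 1 ≤ n ∧ ∃ c : ℕ → ℕ × ℕ,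
    c 0 = (i, j) ∧ c n = (k, l) ∧
    (∀ τ ≤ n, 1 ≤ (c τ).1 ∧ (c τ).1 ≤ st.N ∧ 1 ≤ (c τ).2 ∧ (c τ).2 ≤ st.N) ∧
    ∀ τ, 1 ≤ τ → τ ≤ n →
      Dij st.N (c τ).1 (c τ).2 ⊆ Dij' st.N st.px st.py (c (τ - 1)).1 (c (τ - 1)).2

/-- `A(i,j) = {(i,j)} ∪ {ancestors of (i,j)}`. -/
def AncSet (st : Setup) (i j : ℕ) : Set (ℕ × ℕ) :=
  {(i, j)} ∪ {kl | Ancestor st i j kl.1 kl.2}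

/-- The pair `(i,j)` is degenerate: every `(k,l) ∈ A(i,j)` has all four vertical scaling
corner factors zero, or `z_{pq} = g_{kl}(x_p, y_q)` for all grid points `(x_p, y_q) ∈ D'_{kl}`. -/
def DegenPair (st : Setup) (i j : ℕ) : Prop :=
  ∀ kl ∈ AncSet st i j,
    (st.s (kl.1 - 1) (kl.2 - 1) = 0 ∧ st.s (kl.1 - 1) kl.2 = 0 ∧
      st.s kl.1 (kl.2 - 1) = 0 ∧ st.s kl.1 kl.2 = 0) ∨
    (∀ p ≤ st.N, ∀ q ≤ st.N, (xg st.N p, xg st.N q) ∈ Dij' st.N st.px st.py kl.1 kl.2 →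
      st.z p q = st.g kl.1 kl.2 (xg st.N p, xg st.N q))

/-- The index `r` is degenerate: every `(i,j) ∈ Λ_r` is degenerate. -/
def DegenIdx (st : Setup) {m : ℕ} (B : Fin m → Set (ℝ × ℝ)) (r : Fin m) : Prop :=
  ∀ ij ∈ Lam st B r, DegenPair st ij.1 ij.2

/-- A set `V` of indices is degenerate: every `r ∈ V` is degenerate. -/
def DegenComp (st : Setup) {m : ℕ} (B : Fin m → Set (ℝ × ℝ)) (V : Finset (Fin m)) : Prop :=
  ∀ r ∈ V, DegenIdx st B r

end RFIS

namespace RFIS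

/-- The one-dimensional interval of generation `n`. -/
def cellI (N K n k : ℕ) : Set ℝ :=
  Icc (((k : ℝ) - 1) / ((K : ℝ) ^ n * (N : ℝ))) ((k : ℝ) / ((K : ℝ) ^ n * (N : ℝ)))

/-- Its midpoint. -/
def cmid (N K n k : ℕ) : ℝ := ((k : ℝ) - 1 / 2) / ((K : ℝ) ^ n * (N : ℝ))

lemma Dn_eq (N K n k l : ℕ) : Dn N K n k l = cellI N K n k ×ˢ cellI N K n l := rfl

section cells
variable {N K n k : ℕ}

lemma cmid_mem (hN : 0 < N) (hK : 0 < K) : cmid N K n k ∈ cellI N K n k := by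
  have hp : (0 : ℝ) < (K : ℝ) ^ n * (N : ℝ) := by positivity
  unfold cmid cellI
  constructor
  · gcongr; linarith
  · gcongr; linarith

lemma of_cmid (hN : 0 < N) (hK : 0 < K) {a b : ℕ}
    (h : cmid N K n k ∈ Icc (xg N a) (xg N b)) : a * K ^ n < k ∧ k ≤ b * K ^ n := by
  have hN' : (0 : ℝ) < N := by positivity
  have hP : (0 : ℝ) < (K : ℝ) ^ n := by positivity
  obtain ⟨h1, h2⟩ := h
  unfold cmid xg at h1 h2
  rw [div_le_div_iff₀ (by positivity) (by positivity)] at h1 h2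
  have h1' : (a : ℝ) * (K : ℝ) ^ n ≤ k - 1 / 2 := by
    refine le_of_mul_le_mul_right ?_ hN'
    linarith
  have h2' : (k : ℝ) - 1 / 2 ≤ b * (K : ℝ) ^ n := by
    refine le_of_mul_le_mul_right ?_ hN'
    linarith
  constructor
  · have : ((a * K ^ n : ℕ) : ℝ) < (k : ℝ) := by push_cast; linarith
    exact_mod_cast this
  · have : ((k : ℕ) : ℝ) < ((b * K ^ n + 1 : ℕ) : ℝ) := by push_cast; linarith
    have : k < b * K ^ n + 1 := by exact_mod_cast this
    omega

lemma cellI_sub (hN : 0 < N) (hK : 0 < K) {a b : ℕ} (h1 : a * K ^ n < k) (h2 : k ≤ b * K ^ n) :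
    cellI N K n k ⊆ Icc (xg N a) (xg N b) := by
  have hN' : (0 : ℝ) < N := by positivity
  have hP : (0 : ℝ) < (K : ℝ) ^ n := by positivity
  have h1' : ((a * K ^ n + 1 : ℕ) : ℝ) ≤ k := by exact_mod_cast h1
  have h2' : (k : ℝ) ≤ ((b * K ^ n : ℕ) : ℝ) := by exact_mod_cast h2
  push_cast at h1' h2'
  unfold cellI xg
  apply Icc_subset_Icc
  · rw [div_le_div_iff₀ (by positivity) (by positivity)]
    nlinarith
  · rw [div_le_div_iff₀ (by positivity) (by positivity)]
    nlinarith

lemma cellI_sub_iff (hN : 0 < N) (hK : 0 < K) {a b : ℕ} :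
    cellI N K n k ⊆ Icc (xg N a) (xg N b) ↔ a * K ^ n < k ∧ k ≤ b * K ^ n :=
  ⟨fun h => of_cmid hN hK (h (cmid_mem hN hK)), fun h => cellI_sub hN hK h.1 h.2⟩

lemma Dn_sub_iff (hN : 0 < N) (hK : 0 < K) {l a b c d : ℕ} :
    Dn N K n k l ⊆ Icc (xg N a) (xg N b) ×ˢ Icc (xg N c) (xg N d) ↔
      (a * K ^ n < k ∧ k ≤ b * K ^ n) ∧ (c * K ^ n < l ∧ l ≤ d * K ^ n) := by
  constructor
  · intro h
    have := h (show (cmid N K n k, cmid N K n l) ∈ Dn N K n k l from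
      ⟨cmid_mem hN hK, cmid_mem hN hK⟩)
    exact ⟨of_cmid hN hK this.1, of_cmid hN hK this.2⟩
  · rintro ⟨h1, h2⟩
    exact prod_mono (cellI_sub hN hK h1.1 h1.2) (cellI_sub hN hK h2.1 h2.2)

lemma Dn_interior (hN : 0 < N) (hK : 0 < K) (l : ℕ) :
    (cmid N K n k, cmid N K n l) ∈ interior (Dn N K n k l) := by
  have hp : (0 : ℝ) < (K : ℝ) ^ n * (N : ℝ) := by positivity
  rw [Dn_eq, interior_prod_eq]
  unfold cellI cmid
  rw [interior_Icc, interior_Icc]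
  refine ⟨⟨?_, ?_⟩, ⟨?_, ?_⟩⟩ <;> simp only <;> gcongr <;> linarith

lemma cell_dist {x y : ℝ} (hx : x ∈ cellI N K n k) (hy : y ∈ cellI N K n k) :
    |x - y| ≤ 1 / ((K : ℝ) ^ n * (N : ℝ)) := by
  unfold cellI at hx hy
  have := hx.1; have := hx.2; have := hy.1; have := hy.2
  have e : (k : ℝ) / ((K : ℝ) ^ n * (N : ℝ)) =
    ((k : ℝ) - 1) / ((K : ℝ) ^ n * (N : ℝ)) + 1 / ((K : ℝ) ^ n * (N : ℝ)) := by ring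
  rw [abs_le]; constructor <;> linarith

end cells

/-! ### Bilinear functions -/

lemma bil_lip {F : ℝ × ℝ → ℝ} {E : Set (ℝ × ℝ)} (hF : IsBilinearOn F E) (hE : E ⊆ sq) :
    ∃ L : ℝ, 0 ≤ L ∧ (∀ p ∈ E, |F p| ≤ L) ∧
      ∀ p ∈ E, ∀ q ∈ E, |F p - F q| ≤ L * (|p.1 - q.1| + |p.2 - q.2|) := by
  obtain ⟨a, b, c, d, h⟩ := hF
  refine ⟨|a| + |b| + |c| + |d|, by positivity, ?_, ?_⟩
  · intro p hp
    obtain ⟨⟨h1, h2⟩, ⟨h3, h4⟩⟩ := hE hp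
    rw [h p hp]
    have e1 : |p.1| ≤ 1 := abs_le.2 ⟨by linarith, h2⟩
    have e2 : |p.2| ≤ 1 := abs_le.2 ⟨by linarith, h4⟩
    calc |a + b * p.1 + c * p.2 + d * p.1 * p.2|
        ≤ |a| + |b * p.1| + |c * p.2| + |d * p.1 * p.2| := by
          refine (abs_add_le _ _).trans ?_
          gcongr
          refine (abs_add_le _ _).trans ?_
          gcongr
          exact abs_add_le _ _
      _ = |a| + |b| * |p.1| + |c| * |p.2| + |d| * (|p.1| * |p.2|) := by
          simp only [abs_mul]; ring
      _ ≤ |a| + |b| * 1 + |c| * 1 + |d| * (1 * 1) := by gcongr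
      _ = _ := by ring
  · intro p hp q hq
    obtain ⟨⟨h1, h2⟩, ⟨h3, h4⟩⟩ := hE hp
    obtain ⟨⟨h5, h6⟩, ⟨h7, h8⟩⟩ := hE hq
    rw [h p hp, h q hq]
    have e1 : |p.1| ≤ 1 := abs_le.2 ⟨by linarith, h2⟩
    have e2 : |q.2| ≤ 1 := abs_le.2 ⟨by linarith, h8⟩
    calc |a + b * p.1 + c * p.2 + d * p.1 * p.2 - (a + b * q.1 + c * q.2 + d * q.1 * q.2)|
        = |b * (p.1 - q.1) + c * (p.2 - q.2) + (d * (p.1 * (p.2 - q.2))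
            + d * (q.2 * (p.1 - q.1)))| := by ring_nf
      _ ≤ |b * (p.1 - q.1)| + |c * (p.2 - q.2)| + (|d * (p.1 * (p.2 - q.2))|
            + |d * (q.2 * (p.1 - q.1))|) := by
          refine (abs_add_le _ _).trans ?_
          gcongr
          · exact abs_add_le _ _
          · exact abs_add_le _ _
      _ = |b| * |p.1 - q.1| + |c| * |p.2 - q.2| + (|d| * (|p.1| * |p.2 - q.2|)
            + |d| * (|q.2| * |p.1 - q.1|)) := by simp only [abs_mul]
      _ ≤ |b| * |p.1 - q.1| + |c| * |p.2 - q.2| + (|d| * (1 * |p.2 - q.2|)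
            + |d| * (1 * |p.1 - q.1|)) := by gcongr
      _ ≤ _ := by
          have := abs_nonneg (p.1 - q.1)
          have := abs_nonneg (p.2 - q.2)
          have := abs_nonneg a
          have := abs_nonneg b
          have := abs_nonneg c
          nlinarith [mul_nonneg (abs_nonneg a) (abs_nonneg (p.1 - q.1)),
            mul_nonneg (abs_nonneg a) (abs_nonneg (p.2 - q.2)),
            mul_nonneg (abs_nonneg b) (abs_nonneg (p.2 - q.2)),
            mul_nonneg (abs_nonneg c) (abs_nonneg (p.1 - q.1))]

lemma bil_nonneg {F : ℝ × ℝ → ℝ} {x0 x1 y0 y1 : ℝ} (hx : x0 < x1) (hy : y0 < y1)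
    (hF : IsBilinearOn F (Icc x0 x1 ×ˢ Icc y0 y1))
    (h00 : 0 ≤ F (x0, y0)) (h01 : 0 ≤ F (x0, y1)) (h10 : 0 ≤ F (x1, y0)) (h11 : 0 ≤ F (x1, y1)) :
    ∀ p ∈ Icc x0 x1 ×ˢ Icc y0 y1, 0 ≤ F p := by
  obtain ⟨a, b, c, d, h⟩ := hF
  rintro ⟨x, y⟩ hp
  obtain ⟨⟨h1, h2⟩, ⟨h3, h4⟩⟩ := id hp
  simp only at h1 h2 h3 h4
  have l0 : x0 ∈ Icc x0 x1 := ⟨le_rfl, hx.le⟩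
  have l1 : x1 ∈ Icc x0 x1 := ⟨hx.le, le_rfl⟩
  have m0 : y0 ∈ Icc y0 y1 := ⟨le_rfl, hy.le⟩
  have m1 : y1 ∈ Icc y0 y1 := ⟨hy.le, le_rfl⟩
  rw [h _ ⟨l0, m0⟩] at h00
  rw [h _ ⟨l0, m1⟩] at h01
  rw [h _ ⟨l1, m0⟩] at h10
  rw [h _ ⟨l1, m1⟩] at h11
  simp only at h00 h01 h10 h11
  rw [h _ hp]
  simp only
  have key : 0 ≤ ((x1 - x0) * (y1 - y0)) * (a + b * x + c * y + d * x * y) := by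
    have e : ((x1 - x0) * (y1 - y0)) * (a + b * x + c * y + d * x * y) =
      ((x1 - x) * (y1 - y)) * (a + b * x0 + c * y0 + d * x0 * y0) +
      ((x1 - x) * (y - y0)) * (a + b * x0 + c * y1 + d * x0 * y1) +
      ((x - x0) * (y1 - y)) * (a + b * x1 + c * y0 + d * x1 * y0) +
      ((x - x0) * (y - y0)) * (a + b * x1 + c * y1 + d * x1 * y1) := by ring
    rw [e]
    have := sub_nonneg.2 h1
    have := sub_nonneg.2 h2
    have := sub_nonneg.2 h3
    have := sub_nonneg.2 h4
    positivity
  exact nonneg_of_mul_nonneg_right key (mul_pos (sub_pos.2 hx) (sub_pos.2 hy))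

lemma bil_neg {F : ℝ × ℝ → ℝ} {E : Set (ℝ × ℝ)} (hF : IsBilinearOn F E) :
    IsBilinearOn (fun p => - F p) E := by
  obtain ⟨a, b, c, d, h⟩ := hF
  exact ⟨-a, -b, -c, -d, fun p hp => by simp only; rw [h p hp]; ring⟩

lemma bil_sub_const {F : ℝ × ℝ → ℝ} {E : Set (ℝ × ℝ)} (hF : IsBilinearOn F E) (γ : ℝ) :
    IsBilinearOn (fun p => F p - γ) E := by
  obtain ⟨a, b, c, d, h⟩ := hF
  exact ⟨a - γ, b, c, d, fun p hp => by simp only; rw [h p hp]; ring⟩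

lemma bil_sum {ι : Type*} (s : Finset ι) {F : ι → ℝ × ℝ → ℝ} {E : Set (ℝ × ℝ)}
    (hF : ∀ i ∈ s, IsBilinearOn (F i) E) : IsBilinearOn (fun p => ∑ i ∈ s, F i p) E := by
  classical
  induction s using Finset.induction_on with
  | empty => exact ⟨0, 0, 0, 0, fun p _ => by simp⟩
  | insert i s hi ih =>
    obtain ⟨a, b, c, d, h⟩ := ih fun j hj => hF j (Finset.mem_insert_of_mem hj)
    obtain ⟨a', b', c', d', h'⟩ := hF i (Finset.mem_insert_self _ _)
    refine ⟨a' + a, b' + b, c' + c, d' + d, fun p hp => ?_⟩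
    have e := h p hp
    simp only at e ⊢
    rw [Finset.sum_insert hi, h' p hp, e]; ring

lemma bil_const {F : ℝ × ℝ → ℝ} {x0 x1 y0 y1 γ : ℝ} (hx : x0 < x1) (hy : y0 < y1)
    (hF : IsBilinearOn F (Icc x0 x1 ×ˢ Icc y0 y1))
    (h00 : F (x0, y0) = γ) (h01 : F (x0, y1) = γ) (h10 : F (x1, y0) = γ) (h11 : F (x1, y1) = γ) :
    ∀ p ∈ Icc x0 x1 ×ˢ Icc y0 y1, F p = γ := by
  intro p hp
  have h1 := bil_nonneg hx hy (bil_sub_const hF γ) (by simp [h00]) (by simp [h01]) (by simp [h10])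
    (by simp [h11]) p hp
  have h2 := bil_nonneg hx hy (bil_neg (bil_sub_const hF γ)) (by simp [h00]) (by simp [h01])
    (by simp [h10]) (by simp [h11]) p hp
  linarith

lemma bil_abs {F : ℝ × ℝ → ℝ} {x0 x1 y0 y1 : ℝ} (hx : x0 < x1) (hy : y0 < y1)
    (hF : IsBilinearOn F (Icc x0 x1 ×ˢ Icc y0 y1))
    (h : (0 ≤ F (x0, y0) ∧ 0 ≤ F (x0, y1) ∧ 0 ≤ F (x1, y0) ∧ 0 ≤ F (x1, y1)) ∨
      (F (x0, y0) ≤ 0 ∧ F (x0, y1) ≤ 0 ∧ F (x1, y0) ≤ 0 ∧ F (x1, y1) ≤ 0)) :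
    IsBilinearOn (fun p => |F p|) (Icc x0 x1 ×ˢ Icc y0 y1) := by
  rcases h with ⟨h1, h2, h3, h4⟩ | ⟨h1, h2, h3, h4⟩
  · have := bil_nonneg hx hy hF h1 h2 h3 h4
    obtain ⟨a, b, c, d, h⟩ := hF
    exact ⟨a, b, c, d, fun p hp => by simp only; rw [abs_of_nonneg (this p hp), h p hp]⟩
  · have := bil_nonneg hx hy (bil_neg hF) (by simpa using h1) (by simpa using h2)
      (by simpa using h3) (by simpa using h4)
    obtain ⟨a, b, c, d, h⟩ := bil_neg hF
    refine ⟨a, b, c, d, fun p hp => ?_⟩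
    have h5 := this p hp
    have h6 := h p hp
    simp only at h5 h6 ⊢
    rw [abs_of_nonpos (by linarith), h6]

lemma bil_comp {F : ℝ × ℝ → ℝ} {E E' : Set (ℝ × ℝ)} (hF : IsBilinearOn F E) {u v : ℝ → ℝ}
    (hu : ∃ a b, ∀ t, u t = a * t + b) (hv : ∃ a b, ∀ t, v t = a * t + b)
    (hm : ∀ p ∈ E', (u p.1, v p.2) ∈ E) : IsBilinearOn (fun p => F (u p.1, v p.2)) E' := by
  obtain ⟨a, b, c, d, h⟩ := hF
  obtain ⟨a1, b1, h1⟩ := hu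
  obtain ⟨a2, b2, h2⟩ := hv
  refine ⟨a + b * b1 + c * b2 + d * b1 * b2, b * a1 + d * a1 * b2, c * a2 + d * b1 * a2,
    d * a1 * a2, fun p hp => ?_⟩
  simp only
  rw [h _ (hm p hp)]
  simp only [h1, h2]
  ring

/-! ### Oscillations -/

lemma osc_compare {f F : ℝ × ℝ → ℝ} {E : Set (ℝ × ℝ)} (hne : E.Nonempty) {W σ ε : ℝ}
    (hf : ∀ p ∈ E, |f p| ≤ W)
    (h : ∀ p ∈ E, ∀ q ∈ E, |(F p - F q) - σ * (f p - f q)| ≤ ε) :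
    |Osc F E - |σ| * Osc f E| ≤ ε := by
  obtain ⟨p0, hp0⟩ := hne
  have hbf : BddAbove {d : ℝ | ∃ p ∈ E, ∃ q ∈ E, d = f p - f q} := by
    refine ⟨2 * W, ?_⟩
    rintro d ⟨p, hp, q, hq, rfl⟩
    have := abs_le.1 (hf p hp)
    have := abs_le.1 (hf q hq)
    linarith
  have hf1 : ∀ p ∈ E, ∀ q ∈ E, f p - f q ≤ Osc f E := fun p hp q hq =>
    le_csSup hbf ⟨p, hp, q, hq, rfl⟩
  have hσ : ∀ p ∈ E, ∀ q ∈ E, σ * (f p - f q) ≤ |σ| * Osc f E := by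
    intro p hp q hq
    calc σ * (f p - f q) ≤ |σ * (f p - f q)| := le_abs_self _
      _ = |σ| * |f p - f q| := abs_mul _ _
      _ ≤ _ := by
        gcongr
        rw [abs_le]
        have := hf1 p hp q hq
        have := hf1 q hq p hp
        constructor <;> linarith
  have hF0 : ∀ p ∈ E, ∀ q ∈ E, F p - F q ≤ |σ| * Osc f E + ε := by
    intro p hp q hq
    have := (abs_le.1 (h p hp q hq)).2
    have := hσ p hp q hq
    linarith
  have hbF : BddAbove {d : ℝ | ∃ p ∈ E, ∃ q ∈ E, d = F p - F q} := by
    refine ⟨|σ| * Osc f E + ε, ?_⟩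
    rintro d ⟨p, hp, q, hq, rfl⟩
    exact hF0 p hp q hq
  have hF1 : ∀ p ∈ E, ∀ q ∈ E, F p - F q ≤ Osc F E := fun p hp q hq =>
    le_csSup hbF ⟨p, hp, q, hq, rfl⟩
  have hε : 0 ≤ ε := (abs_nonneg _).trans (h p0 hp0 p0 hp0)
  have hO : 0 ≤ Osc F E := by simpa using hF1 p0 hp0 p0 hp0
  have hup : Osc F E ≤ |σ| * Osc f E + ε := by
    refine csSup_le ⟨_, p0, hp0, p0, hp0, rfl⟩ ?_
    rintro d ⟨p, hp, q, hq, rfl⟩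
    exact hF0 p hp q hq
  have hlow : |σ| * Osc f E ≤ Osc F E + ε := by
    rcases eq_or_ne σ 0 with rfl | hne
    · simp; linarith
    have hpos : 0 < |σ| := abs_pos.2 hne
    have : Osc f E ≤ (Osc F E + ε) / |σ| := by
      refine csSup_le ⟨_, p0, hp0, p0, hp0, rfl⟩ ?_
      rintro d ⟨p, hp, q, hq, rfl⟩
      rw [le_div_iff₀ hpos]
      rcases le_total 0 σ with hs | hs
      · rw [abs_of_nonneg hs]
        have := (abs_le.1 (h p hp q hq)).1
        have := hF1 p hp q hq
        linarith
      · rw [abs_of_nonpos hs]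
        have := (abs_le.1 (h q hq p hp)).1
        have := hF1 q hq p hp
        linarith
    rw [le_div_iff₀ hpos] at this
    linarith
  rw [abs_le]; constructor <;> linarith

lemma osc_image (f : ℝ × ℝ → ℝ) (T : ℝ × ℝ → ℝ × ℝ) (E : Set (ℝ × ℝ)) :
    Osc f (T '' E) = Osc (fun p => f (T p)) E := by
  unfold Osc
  congr 1
  ext d
  simp only [exists_mem_image, mem_ofPred_eq]

end RFIS

namespace RFIS

lemma img_pos {c d a b : ℝ} (hc : 0 < c) :
    (fun t => d + c * t) '' Icc a b = Icc (d + c * a) (d + c * b) := by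
  ext y
  constructor
  · rintro ⟨x, ⟨h1, h2⟩, rfl⟩
    constructor <;> simp only <;> gcongr
  · rintro ⟨h1, h2⟩
    refine ⟨(y - d) / c, ⟨?_, ?_⟩, ?_⟩
    · rw [le_div_iff₀ hc]; linarith
    · rw [div_le_iff₀ hc]; linarith
    · simp only; field_simp; ring

lemma img_neg {c d a b : ℝ} (hc : 0 < c) :
    (fun t => d - c * t) '' Icc a b = Icc (d - c * b) (d - c * a) := by
  ext y
  constructor
  · rintro ⟨x, ⟨h1, h2⟩, rfl⟩
    constructor <;> simp only <;> gcongr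
  · rintro ⟨h1, h2⟩
    refine ⟨(d - y) / c, ⟨?_, ?_⟩, ?_⟩
    · rw [le_div_iff₀ hc]; linarith
    · rw [div_le_iff₀ hc]; linarith
    · simp only; field_simp; ring

lemma px_cases {N K : ℕ} {px : ℕ → ℕ} {i : ℕ} (hN : 0 < N) (hi : 1 ≤ i)
    (h : |xp N px i - xp N px (i - 1)| = (K : ℝ) * (xg N i - xg N (i - 1))) :
    ∃ α, (px (i - 1) = α ∧ px i = α + K) ∨ (px (i - 1) = α + K ∧ px i = α) := by
  have hN' : (0 : ℝ) < N := by positivity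
  obtain ⟨i, rfl⟩ := Nat.exists_eq_add_of_le' hi
  simp only [Nat.add_sub_cancel] at h ⊢
  unfold xp xg at h
  have e : ((i + 1 : ℕ) : ℝ) / N - (i : ℝ) / N = 1 / N := by push_cast; ring
  rw [e, ← sub_div, abs_div, abs_of_pos hN', mul_one_div,
    div_left_inj' hN'.ne'] at h
  rcases le_total 0 ((px (i + 1) : ℝ) - px i) with hs | hs
  · rw [abs_of_nonneg hs] at h
    refine ⟨px i, Or.inl ⟨rfl, ?_⟩⟩
    have : (px (i + 1) : ℝ) = ((px i + K : ℕ) : ℝ) := by push_cast; linarith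
    exact_mod_cast this
  · rw [abs_of_nonpos hs] at h
    refine ⟨px (i + 1), Or.inr ⟨?_, rfl⟩⟩
    have : (px i : ℝ) = ((px (i + 1) + K : ℕ) : ℝ) := by push_cast; linarith
    exact_mod_cast this

lemma map1 {N K : ℕ} {px : ℕ → ℕ} {i : ℕ} (hN : 0 < N) (hK : 0 < K) (hi : 1 ≤ i) (hiN : i ≤ N)
    (hpx : ∀ i ≤ N, px i ≤ N)
    (h : |xp N px i - xp N px (i - 1)| = (K : ℝ) * (xg N i - xg N (i - 1))) :
    ∃ α, α + K ≤ N ∧ Ii' N px i = Icc (xg N α) (xg N (α + K)) ∧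
      (∃ a b, ∀ t, usub N px i t = a * t + b) ∧
      (∀ t ∈ Ii' N px i, usub N px i t ∈ Ii N i) ∧
      ∀ n, ∃ ψ : ℕ → ℕ,
        (∀ F : ℕ → ℝ, ∑ k ∈ Finset.Ioc ((i - 1) * K ^ (n + 1)) (i * K ^ (n + 1)), F k =
          ∑ k ∈ Finset.Ioc (α * K ^ n) ((α + K) * K ^ n), F (ψ k)) ∧
        ∀ k ∈ Finset.Ioc (α * K ^ n) ((α + K) * K ^ n),
          usub N px i '' cellI N K n k = cellI N K (n + 1) (ψ k) := by
  have hN' : (0 : ℝ) < N := by positivity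
  have hK' : (0 : ℝ) < K := by positivity
  obtain ⟨α, hα⟩ := px_cases hN hi h
  have hle : α + K ≤ N := by
    rcases hα with ⟨_, h2⟩ | ⟨h1, _⟩
    · rw [← h2]; exact hpx i hiN
    · rw [← h1]; exact hpx _ (by omega)
  have hmono : xg N α ≤ xg N (α + K) := by unfold xg; gcongr; omega
  have hI : Ii' N px i = Icc (xg N α) (xg N (α + K)) := by
    unfold Ii' xp
    rcases hα with ⟨h1, h2⟩ | ⟨h1, h2⟩
    · rw [h1, h2, uIcc_of_le hmono]
    · rw [h1, h2, uIcc_of_ge hmono]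
  obtain ⟨i, rfl⟩ := Nat.exists_eq_add_of_le' hi
  simp only [Nat.add_sub_cancel] at hα ⊢
  have hKinv : (0 : ℝ) < 1 / K := by positivity
  rcases hα with ⟨h1, h2⟩ | ⟨h1, h2⟩
  · have hu : usub N px (i + 1) = fun t => ((i : ℝ) / N - (α : ℝ) / N / K) + (1 / K) * t := by
      funext t
      unfold usub xp xg
      simp only [Nat.add_sub_cancel]
      rw [h1, h2]
      push_cast
      have : ((α : ℝ) + K) / N - α / N = K / N := by ring
      rw [this]
      have : ((i : ℝ) + 1) / N - i / N = 1 / N := by ring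
      rw [this]
      field_simp
      ring
    refine ⟨α, hle, hI, ⟨1 / K, ((i : ℝ) / N - (α : ℝ) / N / K), fun t => by rw [hu]; ring⟩, ?_, ?_⟩
    · have := img_pos (d := ((i : ℝ) / N - (α : ℝ) / N / K)) (a := xg N α) (b := xg N (α + K)) hKinv
      rw [← hu, ← hI] at this
      intro t ht
      have h3 := mem_image_of_mem (usub N px (i + 1)) ht
      rw [this] at h3
      unfold Ii
      convert h3 using 2
      · unfold xg; simp; ring
      · unfold xg; push_cast; field_simp; ring
    · intro n
      refine ⟨fun k => i * K ^ (n + 1) + (k - α * K ^ n), ?_, ?_⟩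
      · intro F
        symm
        have e1 : (α + K) * K ^ n = α * K ^ n + K ^ (n + 1) := by ring
        have e2 : (i + 1) * K ^ (n + 1) = i * K ^ (n + 1) + K ^ (n + 1) := by ring
        rw [e1, e2]
        generalize K ^ (n + 1) = L
        generalize α * K ^ n = A
        generalize i * L = I
        refine Finset.sum_nbij' (fun k => I + (k - A)) (fun k => A + (k - I)) ?_ ?_ ?_ ?_ ?_
        · intro k hk; simp only [Finset.mem_Ioc] at hk ⊢; omega
        · intro k hk; simp only [Finset.mem_Ioc] at hk ⊢; omega
        · intro k hk; simp only [Finset.mem_Ioc] at hk ⊢; omega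
        · intro k hk; simp only [Finset.mem_Ioc] at hk ⊢; omega
        · intro k hk; rfl
      · intro k hk
        rw [Finset.mem_Ioc] at hk
        rw [hu]
        unfold cellI
        rw [img_pos hKinv]
        have hc : ((i * K ^ (n + 1) + (k - α * K ^ n) : ℕ) : ℝ) =
            i * (K : ℝ) ^ (n + 1) + (k - α * (K : ℝ) ^ n) := by
          push_cast [Nat.cast_sub hk.1.le]; ring
        simp only [hc]
        congr 1
        · field_simp; ring
        · field_simp; ring
  · have hu : usub N px (i + 1) =
        fun t => ((i : ℝ) / N + ((α : ℝ) + K) / N / K) - (1 / K) * t := by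
      funext t
      unfold usub xp xg
      simp only [Nat.add_sub_cancel]
      rw [h1, h2]
      push_cast
      have : (α : ℝ) / N - (α + K) / N = - (K / N) := by ring
      rw [this]
      have : ((i : ℝ) + 1) / N - i / N = 1 / N := by ring
      rw [this]
      field_simp
      ring
    refine ⟨α, hle, hI, ⟨-(1 / K), ((i : ℝ) / N + ((α : ℝ) + K) / N / K),
      fun t => by rw [hu]; ring⟩, ?_, ?_⟩
    · have := img_neg (d := ((i : ℝ) / N + ((α : ℝ) + K) / N / K)) (a := xg N α)
        (b := xg N (α + K)) hKinv
      rw [← hu, ← hI] at this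
      intro t ht
      have h3 := mem_image_of_mem (usub N px (i + 1)) ht
      rw [this] at h3
      unfold Ii
      convert h3 using 2
      · unfold xg; push_cast; simp; ring
      · unfold xg; push_cast; field_simp; ring
    · intro n
      refine ⟨fun k => i * K ^ (n + 1) + ((α + K) * K ^ n + 1 - k), ?_, ?_⟩
      · intro F
        symm
        have e1 : (α + K) * K ^ n = α * K ^ n + K ^ (n + 1) := by ring
        have e2 : (i + 1) * K ^ (n + 1) = i * K ^ (n + 1) + K ^ (n + 1) := by ring
        rw [e1, e2]
        generalize K ^ (n + 1) = L
        generalize α * K ^ n = A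
        generalize i * L = I
        refine Finset.sum_nbij' (fun k => I + (A + L + 1 - k)) (fun k => A + (I + L + 1 - k))
          ?_ ?_ ?_ ?_ ?_
        · intro k hk; simp only [Finset.mem_Ioc] at hk ⊢; omega
        · intro k hk; simp only [Finset.mem_Ioc] at hk ⊢; omega
        · intro k hk; simp only [Finset.mem_Ioc] at hk ⊢; omega
        · intro k hk; simp only [Finset.mem_Ioc] at hk ⊢; omega
        · intro k hk; rfl
      · intro k hk
        rw [Finset.mem_Ioc] at hk
        rw [hu]
        unfold cellI
        rw [img_neg hKinv]
        have hc : ((i * K ^ (n + 1) + ((α + K) * K ^ n + 1 - k) : ℕ) : ℝ) =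
            i * (K : ℝ) ^ (n + 1) + ((α + K) * (K : ℝ) ^ n + 1 - k) := by
          push_cast [Nat.cast_sub (show k ≤ (α + K) * K ^ n + 1 by omega)]; ring
        simp only [hc]
        congr 1
        · field_simp; ring
        · field_simp; ring

end RFIS

namespace RFIS

lemma Setup.N_pos (st : Setup) : 0 < st.N := by have := st.hN; omega

lemma Setup.K_pos (st : Setup) : 0 < st.K := by have := st.hK; omega

/-- The map `(x, y) ↦ (u_i x, v_j y)`. -/
def Setup.T (st : Setup) (i j : ℕ) (p : ℝ × ℝ) : ℝ × ℝ :=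
  (usub st.N st.px i p.1, usub st.N st.py j p.2)

/-- The centre of a square of generation `n`. -/
def Setup.c (st : Setup) (n k l : ℕ) : ℝ × ℝ := (cmid st.N st.K n k, cmid st.N st.K n l)

lemma Setup.c_mem (st : Setup) (n k l : ℕ) : st.c n k l ∈ Dn st.N st.K n k l :=
  ⟨cmid_mem st.N_pos st.K_pos, cmid_mem st.N_pos st.K_pos⟩

lemma Setup.c_int (st : Setup) (n k l : ℕ) : st.c n k l ∈ interior (Dn st.N st.K n k l) :=
  Dn_interior st.N_pos st.K_pos l

lemma mem_idx {N : ℕ} {ij : ℕ × ℕ} :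
    ij ∈ idxS N ↔ (1 ≤ ij.1 ∧ ij.1 ≤ N) ∧ (1 ≤ ij.2 ∧ ij.2 ≤ N) := by
  simp [idxS]

lemma Icc_xg_sub {N a b : ℕ} (hN : 0 < N) (hb : b ≤ N) : Icc (xg N a) (xg N b) ⊆ Icc 0 1 := by
  have hN' : (0 : ℝ) < N := by positivity
  apply Icc_subset_Icc
  · unfold xg; positivity
  · unfold xg; rw [div_le_one hN']; exact_mod_cast hb

open Classical in
lemma sum_cells {N K n a b c d : ℕ} (hN : 0 < N) (hK : 0 < K) (hb : b ≤ N) (hd : d ≤ N)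
    (G : ℕ → ℕ → ℝ) :
    (∑ k ∈ Finset.Icc 1 (K ^ n * N), ∑ l ∈ Finset.Icc 1 (K ^ n * N),
      if Dn N K n k l ⊆ Icc (xg N a) (xg N b) ×ˢ Icc (xg N c) (xg N d) then G k l else 0) =
    ∑ k ∈ Finset.Ioc (a * K ^ n) (b * K ^ n), ∑ l ∈ Finset.Ioc (c * K ^ n) (d * K ^ n), G k l := by
  have key : ∀ a b : ℕ, b ≤ N → Finset.Ioc (a * K ^ n) (b * K ^ n) =
      (Finset.Icc 1 (K ^ n * N)).filter fun k => a * K ^ n < k ∧ k ≤ b * K ^ n := by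
    intro a b hb
    have : b * K ^ n ≤ K ^ n * N := by rw [mul_comm]; gcongr
    ext k
    simp only [Finset.mem_Ioc, Finset.mem_filter, Finset.mem_Icc]
    omega
  rw [key a b hb, key c d hd, Finset.sum_filter]
  refine Finset.sum_congr rfl fun k _ => ?_
  by_cases hk : a * K ^ n < k ∧ k ≤ b * K ^ n
  · rw [if_pos hk, Finset.sum_filter]
    refine Finset.sum_congr rfl fun l _ => ?_
    refine if_congr ?_ rfl rfl
    rw [Dn_sub_iff hN hK]
    tauto
  · rw [if_neg hk]
    refine Finset.sum_eq_zero fun l _ => if_neg ?_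
    rw [Dn_sub_iff hN hK]
    tauto

/-- Geometry of a cell and its domain. -/
lemma Setup.geom (st : Setup) {i j : ℕ} (hi : 1 ≤ i ∧ i ≤ st.N) (hj : 1 ≤ j ∧ j ≤ st.N) :
    ∃ α β, α + st.K ≤ st.N ∧ β + st.K ≤ st.N ∧ Dij' st.N st.px st.py i j = rect st.N st.K α β ∧
      (∀ p ∈ Dij' st.N st.px st.py i j, st.T i j p ∈ Dij st.N i j) := by
  obtain ⟨α, h1, h2, -, h3, -⟩ := map1 st.N_pos st.K_pos hi.1 hi.2 st.hpx (st.hKx i hi.1 hi.2)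
  obtain ⟨β, h1', h2', -, h3', -⟩ := map1 st.N_pos st.K_pos hj.1 hj.2 st.hpy (st.hKy j hj.1 hj.2)
  refine ⟨α, β, h1, h1', ?_, fun p hp => ⟨h3 _ hp.1, h3' _ hp.2⟩⟩
  unfold Dij' rect
  rw [h2, h2']

lemma Setup.bil_T (st : Setup) {i j : ℕ} (hi : 1 ≤ i ∧ i ≤ st.N) (hj : 1 ≤ j ∧ j ≤ st.N)
    {F : ℝ × ℝ → ℝ} (hF : IsBilinearOn F (Dij st.N i j)) :
    IsBilinearOn (fun p => F (st.T i j p)) (Dij' st.N st.px st.py i j) := by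
  obtain ⟨α, -, -, h2, h3, -⟩ := map1 st.N_pos st.K_pos hi.1 hi.2 st.hpx (st.hKx i hi.1 hi.2)
  obtain ⟨β, -, -, h2', h3', -⟩ := map1 st.N_pos st.K_pos hj.1 hj.2 st.hpy (st.hKy j hj.1 hj.2)
  exact bil_comp hF h2 h2' fun p hp => ⟨h3 _ hp.1, h3' _ hp.2⟩

open Classical in
lemma Setup.reindex (st : Setup) {i j : ℕ} (hi : 1 ≤ i ∧ i ≤ st.N) (hj : 1 ≤ j ∧ j ≤ st.N)
    (n : ℕ) :
    (∑ k ∈ Finset.Icc 1 (st.K ^ (n + 1) * st.N), ∑ l ∈ Finset.Icc 1 (st.K ^ (n + 1) * st.N),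
      if Dn st.N st.K (n + 1) k l ⊆ Dij st.N i j then Osc st.f (Dn st.N st.K (n + 1) k l) else 0) =
    ∑ k ∈ Finset.Icc 1 (st.K ^ n * st.N), ∑ l ∈ Finset.Icc 1 (st.K ^ n * st.N),
      if Dn st.N st.K n k l ⊆ Dij' st.N st.px st.py i j then
        Osc (fun p => st.f (st.T i j p)) (Dn st.N st.K n k l) else 0 := by
  obtain ⟨α, h1, h2, -, -, h3⟩ := map1 st.N_pos st.K_pos hi.1 hi.2 st.hpx (st.hKx i hi.1 hi.2)
  obtain ⟨β, h1', h2', -, -, h3'⟩ := map1 st.N_pos st.K_pos hj.1 hj.2 st.hpy (st.hKy j hj.1 hj.2)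
  obtain ⟨ψ, hs, hψ⟩ := h3 n
  obtain ⟨ψ', hs', hψ'⟩ := h3' n
  unfold Dij Ii Dij'
  rw [h2, h2']
  rw [sum_cells st.N_pos st.K_pos hi.2 hj.2, sum_cells st.N_pos st.K_pos h1 h1', hs]
  refine Finset.sum_congr rfl fun k hk => ?_
  rw [hs']
  refine Finset.sum_congr rfl fun l hl => ?_
  rw [← osc_image st.f (st.T i j), Dn_eq, Dn_eq, ← hψ k hk, ← hψ' l hl, prod_image_image_eq]
  rfl

lemma Setup.f_bdd (st : Setup) : ∃ W : ℝ, 0 ≤ W ∧ ∀ p ∈ sq, |st.f p| ≤ W := by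
  have hc : IsCompact sq := isCompact_Icc.prod isCompact_Icc
  obtain ⟨W, hW⟩ := hc.exists_bound_of_continuousOn st.hfcont
  refine ⟨|W|, abs_nonneg _, fun p hp => ?_⟩
  exact (hW p hp).trans (le_abs_self _)

lemma Setup.analytic (st : Setup) {i j : ℕ} (hi : 1 ≤ i ∧ i ≤ st.N) (hj : 1 ≤ j ∧ j ≤ st.N) :
    ∃ C : ℝ, 0 ≤ C ∧ ∀ n k l, Dn st.N st.K n k l ⊆ Dij' st.N st.px st.py i j →
      |Osc (fun p => st.f (st.T i j p)) (Dn st.N st.K n k l)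
        - |st.S (st.T i j (st.c n k l))| * Osc st.f (Dn st.N st.K n k l)| ≤ C / (st.K : ℝ) ^ n := by
  have hN' : (0 : ℝ) < st.N := by exact_mod_cast st.N_pos
  have hN1 : (1 : ℝ) ≤ st.N := by exact_mod_cast st.N_pos
  have hK' : (0 : ℝ) < st.K := by exact_mod_cast st.K_pos
  obtain ⟨α, β, hα, hβ, hrect, -⟩ := st.geom hi hj
  have hsub : Dij' st.N st.px st.py i j ⊆ sq := by
    rw [hrect]
    exact prod_mono (Icc_xg_sub st.N_pos hα) (Icc_xg_sub st.N_pos hβ)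
  obtain ⟨W, hW0, hW⟩ := st.f_bdd
  obtain ⟨Ls, hLs, hs0, hs1⟩ := bil_lip
    (st.bil_T hi hj (st.hSbil i j hi.1 hi.2 hj.1 hj.2)) hsub
  obtain ⟨Lh, hLh, hh0, hh1⟩ := bil_lip
    (st.bil_T hi hj (st.hhbil i j hi.1 hi.2 hj.1 hj.2)) hsub
  obtain ⟨Lg, hLg, hg0, hg1⟩ := bil_lip (st.hgbil i j hi.1 hi.2 hj.1 hj.2) hsub
  refine ⟨2 * (Ls * (W + Lg) + Ls * (W + Lg) + Ls * Lg + Lh), by positivity, ?_⟩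
  intro n k l hD
  refine osc_compare ⟨_, st.c_mem n k l⟩ (W := W) (fun p hp => hW p (hsub (hD hp))) ?_
  have hP : (0 : ℝ) < (st.K : ℝ) ^ n := by positivity
  have hdist : ∀ p ∈ Dn st.N st.K n k l, ∀ q ∈ Dn st.N st.K n k l,
      |p.1 - q.1| + |p.2 - q.2| ≤ 2 / (st.K : ℝ) ^ n := by
    intro p hp q hq
    have a1 := cell_dist hp.1 hq.1
    have a2 := cell_dist hp.2 hq.2
    have : 1 / ((st.K : ℝ) ^ n * (st.N : ℝ)) ≤ 1 / (st.K : ℝ) ^ n := by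
      apply one_div_le_one_div_of_le hP
      nlinarith
    have e : 2 / (st.K : ℝ) ^ n = 1 / (st.K : ℝ) ^ n + 1 / (st.K : ℝ) ^ n := by ring
    linarith
  intro p hp q hq
  have hc := st.c_mem n k l
  have fp := st.hfeq i j hi.1 hi.2 hj.1 hj.2 p (hD hp)
  have fq := st.hfeq i j hi.1 hi.2 hj.1 hj.2 q (hD hq)
  change st.f (st.T i j p) = st.S (st.T i j p) * (st.f p - st.g i j p) + st.h (st.T i j p) at fp
  change st.f (st.T i j q) = st.S (st.T i j q) * (st.f q - st.g i j q) + st.h (st.T i j q) at fq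
  have lip : ∀ {F : ℝ × ℝ → ℝ} {L : ℝ}, 0 ≤ L → (∀ p ∈ Dij' st.N st.px st.py i j,
      ∀ q ∈ Dij' st.N st.px st.py i j, |F p - F q| ≤ L * (|p.1 - q.1| + |p.2 - q.2|)) →
      ∀ p ∈ Dn st.N st.K n k l, ∀ q ∈ Dn st.N st.K n k l,
        |F p - F q| ≤ L * (2 / (st.K : ℝ) ^ n) := by
    intro F L hL hF p hp q hq
    refine (hF p (hD hp) q (hD hq)).trans ?_
    gcongr
    exact hdist p hp q hq
  have b1 := lip hLs hs1 p hp _ hc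
  have b2 := lip hLs hs1 q hq _ hc
  have b3 := lip hLg hg1 p hp q hq
  have b4 := lip hLh hh1 p hp q hq
  have b5 := hs0 _ (hD hc)
  have b6 : ∀ p ∈ Dn st.N st.K n k l, |st.f p - st.g i j p| ≤ W + Lg := fun p hp =>
    (abs_sub _ _).trans (add_le_add (hW p (hsub (hD hp))) (hg0 p (hD hp)))
  rw [fp, fq]
  set δ := 2 / (st.K : ℝ) ^ n with hδ
  have hδ0 : 0 ≤ δ := by positivity
  set σ := st.S (st.T i j (st.c n k l))
  calc _ = |(st.S (st.T i j p) - σ) * (st.f p - st.g i j p)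
          - (st.S (st.T i j q) - σ) * (st.f q - st.g i j q)
          - σ * (st.g i j p - st.g i j q) + (st.h (st.T i j p) - st.h (st.T i j q))| := by
        congr 1; ring
    _ ≤ |st.S (st.T i j p) - σ| * |st.f p - st.g i j p|
          + |st.S (st.T i j q) - σ| * |st.f q - st.g i j q|
          + |σ| * |st.g i j p - st.g i j q| + |st.h (st.T i j p) - st.h (st.T i j q)| := by
        simp only [← abs_mul]
        refine (abs_add_le _ _).trans ?_
        gcongr
        refine (abs_sub _ _).trans ?_
        gcongr
        exact abs_sub _ _
    _ ≤ (Ls * δ) * (W + Lg) + (Ls * δ) * (W + Lg) + Ls * (Lg * δ) + Lh * δ := by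
        have := b6 p hp
        have := b6 q hq
        gcongr
    _ = _ := by rw [hδ]; ring

lemma xg_lt {N a b : ℕ} (hN : 0 < N) (h : a < b) : xg N a < xg N b := by
  have hN' : (0 : ℝ) < N := by positivity
  unfold xg
  gcongr

lemma Setup.bil_absS (st : Setup) (hst : Steady st) {i j : ℕ} (hi : 1 ≤ i ∧ i ≤ st.N)
    (hj : 1 ≤ j ∧ j ≤ st.N) :
    IsBilinearOn (fun p => |st.S (st.T i j p)|) (Dij' st.N st.px st.py i j) := by
  refine st.bil_T hi hj (F := fun p => |st.S p|) ?_
  refine bil_abs (xg_lt st.N_pos (by omega)) (xg_lt st.N_pos (by omega))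
    (st.hSbil i j hi.1 hi.2 hj.1 hj.2) ?_
  rw [st.hSval _ (by omega) _ (by omega), st.hSval _ (by omega) _ (by omega),
    st.hSval _ (by omega) _ (by omega), st.hSval _ (by omega) _ (by omega)]
  exact hst i j hi.1 hi.2 hj.1 hj.2

section part
variable (st : Setup) {m : ℕ} {B : Fin m → Set (ℝ × ℝ)}

lemma mem_Lam {r : Fin m} {ij : ℕ × ℕ} :
    ij ∈ Lam st B r ↔ ij ∈ idxS st.N ∧ Dij st.N ij.1 ij.2 ⊆ B r := by
  classical
  simp [Lam]

lemma mem_Lam' {r : Fin m} {ij : ℕ × ℕ} :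
    ij ∈ Lam' st B r ↔ ij ∈ idxS st.N ∧ Dij' st.N st.px st.py ij.1 ij.2 ⊆ B r := by
  classical
  simp [Lam']

lemma part_unique (hpart : IsPartition m B) {n k l : ℕ} {r t : Fin m}
    (hr : Dn st.N st.K n k l ⊆ B r) (ht : Dn st.N st.K n k l ⊆ B t) : r = t := by
  by_contra h
  have : st.c n k l ∈ interior (B r) ∩ interior (B t) :=
    ⟨interior_mono hr (st.c_int n k l), interior_mono ht (st.c_int n k l)⟩
  rw [hpart.2.2 r t h] at this
  exact this

lemma exists_cell1 {N P k : ℕ} (hk : 1 ≤ k ∧ k ≤ P * N) :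
    ∃ i, (1 ≤ i ∧ i ≤ N) ∧ (i - 1) * P < k ∧ k ≤ i * P := by
  have hP : 0 < P := by
    rcases Nat.eq_zero_or_pos P with rfl | h
    · omega
    · exact h
  have h1 : (k - 1) / P < N := by
    rw [Nat.div_lt_iff_lt_mul hP, mul_comm]; omega
  refine ⟨(k - 1) / P + 1, ⟨Nat.le_add_left 1 _, h1⟩, ?_, ?_⟩
  · have := Nat.div_mul_le_self (k - 1) P
    simp only [Nat.add_sub_cancel]
    omega
  · have := Nat.lt_div_mul_add (a := k - 1) hP
    rw [add_mul]
    omega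

lemma cell1_unique {P k i i' : ℕ} (hi : 1 ≤ i) (hi' : 1 ≤ i') (h1 : (i - 1) * P < k)
    (h2 : k ≤ i * P) (h1' : (i' - 1) * P < k) (h2' : k ≤ i' * P) : i = i' := by
  by_contra hne
  rcases Nat.lt_or_gt_of_ne hne with h | h
  · have : i * P ≤ (i' - 1) * P := Nat.mul_le_mul_right _ (by omega)
    omega
  · have : i' * P ≤ (i - 1) * P := Nat.mul_le_mul_right _ (by omega)
    omega

lemma exists_cell {n k l : ℕ} (hk : k ∈ Finset.Icc 1 (st.K ^ n * st.N))
    (hl : l ∈ Finset.Icc 1 (st.K ^ n * st.N)) :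
    ∃ ij ∈ idxS st.N, Dn st.N st.K n k l ⊆ Dij st.N ij.1 ij.2 := by
  obtain ⟨i, hi, hi'⟩ := exists_cell1 (Finset.mem_Icc.1 hk)
  obtain ⟨j, hj, hj'⟩ := exists_cell1 (Finset.mem_Icc.1 hl)
  exact ⟨(i, j), mem_idx.2 ⟨hi, hj⟩, (Dn_sub_iff st.N_pos st.K_pos).2 ⟨hi', hj'⟩⟩

lemma cell_unique {n k l : ℕ} {ij ij' : ℕ × ℕ} (h : ij ∈ idxS st.N) (h' : ij' ∈ idxS st.N)
    (hs : Dn st.N st.K n k l ⊆ Dij st.N ij.1 ij.2)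
    (hs' : Dn st.N st.K n k l ⊆ Dij st.N ij'.1 ij'.2) : ij = ij' := by
  have a := (Dn_sub_iff st.N_pos st.K_pos).1 hs
  have b := (Dn_sub_iff st.N_pos st.K_pos).1 hs'
  rw [mem_idx] at h h'
  exact Prod.ext (cell1_unique h.1.1 h'.1.1 a.1.1 a.1.2 b.1.1 b.1.2)
    (cell1_unique h.2.1 h'.2.1 a.2.1 a.2.2 b.2.1 b.2.2)

open Classical in
lemma split_cells (hpart : IsPartition m B) (hcomp : IsCompatible st B) (r : Fin m) {n k l : ℕ}
    (hk : k ∈ Finset.Icc 1 (st.K ^ n * st.N)) (hl : l ∈ Finset.Icc 1 (st.K ^ n * st.N)) (x : ℝ) :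
    (if Dn st.N st.K n k l ⊆ B r then x else 0) =
      ∑ ij ∈ Lam st B r, if Dn st.N st.K n k l ⊆ Dij st.N ij.1 ij.2 then x else 0 := by
  obtain ⟨ij, hij, hs⟩ := exists_cell st hk hl
  have hij' := mem_idx.1 hij
  obtain ⟨t, ht⟩ := (hcomp.1 ij.1 ij.2 hij'.1.1 hij'.1.2 hij'.2.1 hij'.2.2).1
  by_cases hr : Dn st.N st.K n k l ⊆ B r
  · have : r = t := part_unique st hpart hr (hs.trans ht)
    subst this
    rw [if_pos hr, Finset.sum_eq_single ij, if_pos hs]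
    · intro b hb hne
      refine if_neg fun hb' => hne ?_
      exact cell_unique st ((mem_Lam st).1 hb).1 hij hb' hs
    · intro h
      exact absurd ((mem_Lam st).2 ⟨hij, ht⟩) h
  · rw [if_neg hr]
    symm
    refine Finset.sum_eq_zero fun b hb => if_neg fun hb' => hr ?_
    exact hb'.trans ((mem_Lam st).1 hb).2

lemma T_eq (i j : ℕ) (x y : ℝ) :
    st.T i j (x, y) = (usub st.N st.px i x, usub st.N st.py j y) := rfl

lemma bil_absSum (hsteady : Steady st) (r : Fin m) (α β : ℕ) :
    IsBilinearOn (fun x => ∑ ij ∈ LamAB st B r α β, |st.S (st.T ij.1 ij.2 x)|)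
        (rect st.N st.K α β) := by
  have h : ∀ ab ∈ LamAB st B r α β,
      IsBilinearOn (fun x => |st.S (st.T ab.1 ab.2 x)|) (rect st.N st.K α β) := by
    intro ab hab
    unfold LamAB at hab
    rw [Finset.mem_filter] at hab
    have hab' := mem_idx.1 ((mem_Lam st).1 hab.1).1
    rw [← hab.2]
    exact st.bil_absS hsteady hab'.1 hab'.2
  exact bil_sum _ h

open Classical in
lemma pointwise_sum {γ : Fin m → Fin m → ℝ} (hpart : IsPartition m B) (hcomp : IsCompatible st B)
    (hsteady : Steady st) (hus : HasUniformSums st B γ) (hγ0 : GammaZero st B γ) (r : Fin m)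
    {n k l : ℕ}
    (hk : k ∈ Finset.Icc 1 (st.K ^ n * st.N)) (hl : l ∈ Finset.Icc 1 (st.K ^ n * st.N)) :
    (∑ ij ∈ Lam st B r, if Dn st.N st.K n k l ⊆ Dij' st.N st.px st.py ij.1 ij.2 then
      |st.S (st.T ij.1 ij.2 (st.c n k l))| else 0) =
    ∑ t, if Dn st.N st.K n k l ⊆ B t then γ r t else 0 := by
  obtain ⟨ij, hij, hs⟩ := exists_cell st hk hl
  have hij' := mem_idx.1 hij
  obtain ⟨t, ht⟩ := (hcomp.1 ij.1 ij.2 hij'.1.1 hij'.1.2 hij'.2.1 hij'.2.2).1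
  have hst : Dn st.N st.K n k l ⊆ B t := hs.trans ht
  rw [Finset.sum_eq_single t (fun b _ hb => if_neg fun h => hb (part_unique st hpart h hst))
    (fun h => absurd (Finset.mem_univ _) h), if_pos hst]
  rcases Finset.eq_empty_or_nonempty (Lam st B r ∩ Lam' st B t) with he | hne
  · rw [hγ0 r t he]
    refine Finset.sum_eq_zero fun ab hab => if_neg fun h => ?_
    have hab1 := ((mem_Lam st).1 hab).1
    have hab' := mem_idx.1 hab1
    obtain ⟨t', ht'⟩ := (hcomp.1 ab.1 ab.2 hab'.1.1 hab'.1.2 hab'.2.1 hab'.2.2).2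
    have : t' = t := part_unique st hpart (h.trans ht') hst
    subst this
    have : ab ∈ Lam st B r ∩ Lam' st B t' :=
      Finset.mem_inter.2 ⟨hab, (mem_Lam' st).2 ⟨hab1, ht'⟩⟩
    rw [he] at this
    simp at this
  · -- a domain containing the square
    obtain ⟨e, he⟩ := hne
    obtain ⟨he1, he2⟩ := Finset.mem_inter.1 he
    have he1' := (mem_Lam st).1 he1
    have he2' := (mem_Lam' st).1 he2
    have hee := mem_idx.1 he1'.1
    have hB := hcomp.2 r t ⟨e.1, e.2, hee.1.1, hee.1.2, hee.2.1, hee.2.2, he1'.2, he2'.2⟩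
    have hc : st.c n k l ∈ B t := hst (st.c_mem n k l)
    rw [hB] at hc
    simp only [mem_iUnion] at hc
    obtain ⟨p, q, ⟨hp1, hp2, hq1, hq2, hpqr, hpqt⟩, hmem⟩ := hc
    obtain ⟨α, β, hα, hβ, hrect, -⟩ := st.geom ⟨hp1, hp2⟩ ⟨hq1, hq2⟩
    have hsub : Dn st.N st.K n k l ⊆ Dij' st.N st.px st.py p q := by
      rw [hrect] at hmem ⊢
      exact (Dn_sub_iff st.N_pos st.K_pos).2
        ⟨of_cmid st.N_pos st.K_pos hmem.1, of_cmid st.N_pos st.K_pos hmem.2⟩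
    have hidx : (p, q) ∈ idxS st.N := mem_idx.2 ⟨⟨hp1, hp2⟩, ⟨hq1, hq2⟩⟩
    have hpq : (p, q) ∈ Lam st B r ∩ Lam' st B t :=
      Finset.mem_inter.2 ⟨(mem_Lam st).2 ⟨hidx, hpqr⟩, (mem_Lam' st).2 ⟨hidx, hpqt⟩⟩
    obtain ⟨s1, s2, s3, s4⟩ := hus r t ⟨_, hpq⟩ α β hα hβ ⟨_, hpq, hrect⟩
    have hsum : (∑ ij ∈ Lam st B r, if Dn st.N st.K n k l ⊆ Dij' st.N st.px st.py ij.1 ij.2 then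
        |st.S (st.T ij.1 ij.2 (st.c n k l))| else 0) =
        ∑ ij ∈ LamAB st B r α β, |st.S (st.T ij.1 ij.2 (st.c n k l))| := by
      unfold LamAB
      rw [Finset.sum_filter]
      refine Finset.sum_congr rfl fun ab hab => if_congr ?_ rfl rfl
      have hab' := mem_idx.1 ((mem_Lam st).1 hab).1
      rw [← hrect]
      constructor
      · intro h
        rcases st.hdisj ab.1 ab.2 p q hab'.1.1 hab'.1.2 hab'.2.1 hab'.2.2 hp1 hp2 hq1 hq2 with
          h' | h'
        · exact h'
        · have : st.c n k l ∈ interior (Dij' st.N st.px st.py ab.1 ab.2) ∩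
              interior (Dij' st.N st.px st.py p q) :=
            ⟨interior_mono h (st.c_int n k l), interior_mono hsub (st.c_int n k l)⟩
          rw [h'] at this
          exact absurd this (notMem_empty _)
      · intro h
        rw [h]; exact hsub
    rw [hsum]
    have hbil := bil_absSum st (B := B) hsteady r α β
    have hKp := st.K_pos
    refine bil_const (xg_lt st.N_pos (by omega)) (xg_lt st.N_pos (by omega)) hbil s1 s3 s2 s4
      (st.c n k l) ?_
    rw [hrect] at hmem
    exact hmem

end part

end RFIS

open RFIS in
/-- **Lemma 4.3.**  If the vertical scaling factors are steady and have uniform sums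
`γ_{rt}` under a compatible partition (with `γ_{rt} = 0` when `Λ_r ∩ Λ'_t = ∅`), then there
is a constant `C > 0` such that
`|O(f, n+1, B_r) − Σ_t γ_{rt} O(f, n, B_t)| ≤ C Kⁿ` for all `r` and all `n ≥ 1`. -/
theorem oscillation_recursion (st : Setup) (m : ℕ) (B : Fin m → Set (ℝ × ℝ))
    (γ : Fin m → Fin m → ℝ) (hpart : IsPartition m B) (hcomp : IsCompatible st B)
    (hsteady : Steady st) (hus : HasUniformSums st B γ) (hγ0 : GammaZero st B γ) :
    ∃ C : ℝ, 0 < C ∧ ∀ r : Fin m, ∀ n : ℕ, 1 ≤ n →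
      |OscSum st.f st.N st.K (n + 1) (B r)
          - ∑ t : Fin m, γ r t * OscSum st.f st.N st.K n (B t)|
        ≤ C * (st.K : ℝ) ^ n := by
  classical
  have hN' : (0 : ℝ) < st.N := by exact_mod_cast st.N_pos
  have hK' : (0 : ℝ) < st.K := by exact_mod_cast st.K_pos
  have hA : ∀ ij : ℕ × ℕ, ∃ C : ℝ, 0 ≤ C ∧ (ij ∈ idxS st.N → ∀ n k l,
      Dn st.N st.K n k l ⊆ Dij' st.N st.px st.py ij.1 ij.2 →
      |Osc (fun p => st.f (st.T ij.1 ij.2 p)) (Dn st.N st.K n k l)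
        - |st.S (st.T ij.1 ij.2 (st.c n k l))| * Osc st.f (Dn st.N st.K n k l)|
          ≤ C / (st.K : ℝ) ^ n) := by
    intro ij
    by_cases h : ij ∈ idxS st.N
    · obtain ⟨C, h0, h1⟩ := st.analytic (mem_idx.1 h).1 (mem_idx.1 h).2
      exact ⟨C, h0, fun _ => h1⟩
    · exact ⟨0, le_rfl, fun h' => absurd h' h⟩
  choose C hC0 hC using hA
  have hsum0 : 0 ≤ ∑ ij ∈ idxS st.N, C ij := Finset.sum_nonneg fun ij _ => hC0 ij
  refine ⟨(∑ ij ∈ idxS st.N, C ij) * (st.N : ℝ) ^ 2 + 1, by positivity, ?_⟩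
  intro r n _
  have hP : (0 : ℝ) < (st.K : ℝ) ^ n := by positivity
  set Q := Finset.Icc 1 (st.K ^ n * st.N) with hQ
  have hcard : (Q.card : ℝ) = (st.K : ℝ) ^ n * st.N := by simp [hQ]
  -- left side
  have hL : OscSum st.f st.N st.K (n + 1) (B r) = ∑ ij ∈ Lam st B r, ∑ k ∈ Q, ∑ l ∈ Q,
      if Dn st.N st.K n k l ⊆ Dij' st.N st.px st.py ij.1 ij.2 then
        Osc (fun p => st.f (st.T ij.1 ij.2 p)) (Dn st.N st.K n k l) else 0 := by
    refine Eq.trans ?_ (Finset.sum_congr rfl fun ij hij => st.reindex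
      (mem_idx.1 ((mem_Lam st).1 hij).1).1 (mem_idx.1 ((mem_Lam st).1 hij).1).2 n)
    unfold OscSum
    rw [Finset.sum_comm (s := Lam st B r)]
    refine Finset.sum_congr rfl fun k hk => ?_
    rw [Finset.sum_comm (s := Lam st B r)]
    refine Finset.sum_congr rfl fun l hl => ?_
    exact split_cells st hpart hcomp r hk hl _
  -- right side
  have hR : ∑ t : Fin m, γ r t * OscSum st.f st.N st.K n (B t) =
      ∑ ij ∈ Lam st B r, ∑ k ∈ Q, ∑ l ∈ Q,
      if Dn st.N st.K n k l ⊆ Dij' st.N st.px st.py ij.1 ij.2 then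
        |st.S (st.T ij.1 ij.2 (st.c n k l))| * Osc st.f (Dn st.N st.K n k l) else 0 := by
    unfold OscSum
    simp only [Finset.mul_sum]
    rw [Finset.sum_comm, Finset.sum_comm (s := Lam st B r)]
    refine Finset.sum_congr rfl fun k hk => ?_
    rw [Finset.sum_comm, Finset.sum_comm (s := Lam st B r)]
    refine Finset.sum_congr rfl fun l hl => ?_
    have := pointwise_sum st hpart hcomp hsteady hus hγ0 r hk hl
    have h2 := congrArg (fun x => x * Osc st.f (Dn st.N st.K n k l)) this
    simp only [Finset.sum_mul, ite_mul, zero_mul] at h2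
    rw [h2]
    simp only [mul_ite, mul_zero]
  rw [hL, hR, ← Finset.sum_sub_distrib]
  simp only [← Finset.sum_sub_distrib]
  have hterm : ∀ ij ∈ Lam st B r, ∀ k l,
      |(if Dn st.N st.K n k l ⊆ Dij' st.N st.px st.py ij.1 ij.2 then
        Osc (fun p => st.f (st.T ij.1 ij.2 p)) (Dn st.N st.K n k l) else 0) -
      (if Dn st.N st.K n k l ⊆ Dij' st.N st.px st.py ij.1 ij.2 then
        |st.S (st.T ij.1 ij.2 (st.c n k l))| * Osc st.f (Dn st.N st.K n k l) else 0)|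
      ≤ C ij / (st.K : ℝ) ^ n := by
    intro ij hij k l
    split_ifs with h
    · exact hC ij ((mem_Lam st).1 hij).1 n k l h
    · simp only [sub_zero, abs_zero]
      exact div_nonneg (hC0 ij) hP.le
  calc _ ≤ ∑ ij ∈ Lam st B r, ∑ k ∈ Q, ∑ l ∈ Q, C ij / (st.K : ℝ) ^ n := by
        refine (Finset.abs_sum_le_sum_abs _ _).trans (Finset.sum_le_sum fun ij hij => ?_)
        refine (Finset.abs_sum_le_sum_abs _ _).trans (Finset.sum_le_sum fun k _ => ?_)
        refine (Finset.abs_sum_le_sum_abs _ _).trans (Finset.sum_le_sum fun l _ => ?_)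
        exact hterm ij hij k l
    _ = (∑ ij ∈ Lam st B r, C ij) * (st.N : ℝ) ^ 2 * (st.K : ℝ) ^ n := by
        simp only [Finset.sum_const, nsmul_eq_mul, hcard]
        rw [Finset.sum_mul, Finset.sum_mul]
        refine Finset.sum_congr rfl fun ij _ => ?_
        field_simp
    _ ≤ (∑ ij ∈ idxS st.N, C ij) * (st.N : ℝ) ^ 2 * (st.K : ℝ) ^ n := by
        gcongr
        · exact fun ij _ _ => hC0 ij
        · intro ij hij
          exact ((mem_Lam st).1 hij).1
    _ ≤ _ := by
        gcongr
        linarith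
end
end
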